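/- arXiv:1902.03366 — 2 statements merged into one kernel-verified Lean document; each statement's English description precedes it below -/
import Mathlib

section
/- Third-order composite hypothesis testing asymptotics, converse: Let P and Q₁,…,Q_k be probability distributions on a countable alphabet 𝒳 with Q_j(x) > 0 whenever P(x) > 0. Set D_j := E_{X∼P}[ log(P(X)/Q_j(X)) ], and assume V_j := Var_{X∼P}[ log(P(X)/Q_j(X)) ] > 0 and T_j := E_{X∼P}[ |log(P(X)/Q_j(X)) − D_j|³ ] < ∞ for every j. Let 𝖵 be the k×k covariance matrix of the vector ( log(P(X)/Q_j(X)) )_{j=1}^k under X ∼ P. Fix α ∈ (0,1) and put ε := 1−α. Then there exist a constant c' ≥ 0 and n₀ ∈ ℕ such that for all n ≥ n₀, every (β₁,…,β_k) ∈ β_α(P^{⊗n}, {Q_j^{⊗n}}_{j=1}^k) with β_j > 0 for all j satisfies ( ( log β_j + n·D_j + (1/2)·log n + c' ) / √n )_{j=1}^k ∈ Q_inv(𝖵,ε). -/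
/-!
The proof combines a change of measure with a multivariate Berry–Esseen bound for lower orthants
and a lower bound for the growth of Gaussian orthant probabilities.

*Change of measure.* Write `ℓ_j = log (P / Q_j)` and let `t` be a test on `n` samples with error
vector `β`. Off the event that `∑ ℓ_j ≥ γ_j` for all `j`, some alternative satisfies
`P^n ≤ e^{γ_j} Q_j^n`, so `α` is at most the probability of the event plus `∑_j e^{γ_j} β_j`
(`meta_converse`). With `γ_j = -log β_j - (1/2) log n` each summand equals `1 / √n`, whence
`P^n[∀ j, ∑ (D_j - ℓ_j) ≤ log β_j + n D_j + (1/2) log n] ≥ α - k / √n`.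

*Berry–Esseen.* The vector `(D_j - ℓ_j)_j` is centered with covariance `V = A Aᵀ`, which may be
singular but has a positive diagonal. The distribution functions of its sums and of the Gaussian
laws are `O(1 / √n)` apart (`berry_esseen`), by Lindeberg exchange and induction on `n`. In the
presence of Gaussian noise of variance `t`, exchanging one summand by a Gaussian with the same first
two moments costs `O(t^{-3/2})`: integrate the second-order Taylor expansion of the Cameron–Martin
density (`gaussPi_smooth_taylor`, `comparison`). The test function of an exchange is split into the
difference between the law of the preceding summands and its Gaussian counterpart, which is small by
induction, and a Gaussian part, which raises the noise variance to order `n` (`exchange_step`). The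
additional noise of constant variance `τ` is removed by anti-concentration (`smoothing_ineq`); for
large `τ` the induction constant re-enters with a factor at most `1 / 2` (`sum_errors_le`). A
singular `V` is treated through a generalized inverse `M` of `A`: the law of a summand is carried by
the range of `A`, so it is the image under `A` of a law on which nondegenerate noise acts.

*Growth.* It follows that the Gaussian orthant probability is at least `α - (k + B) / √n`. Raising
the corner of the orthant by `c' / √n` makes up for the deficit (`exists_shift`). In a large cube,
the Gaussian measure is comparable to the Lebesgue measure, and both the orthant region and the
complement of its enlargement have volume bounded below. Segments joining the two, divided into `m`
steps, have a division point in the layer between them, so the layer has volume of order at least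
`1 / m` (`layer_volume`, `gaussian_growth`).
-/

/-- `P[Z ≤ z]` for the centered Gaussian vector `Z = A·W` in `ℝ^d`, where `W` is a vector of
`d` independent standard Gaussians (so `Z` has covariance `A·Aᵀ`). -/
noncomputable def stdGaussianCdf {d : ℕ} (A : Matrix (Fin d) (Fin d) ℝ) (z : Fin d → ℝ) : ℝ :=
  ((MeasureTheory.Measure.map (fun w => A.mulVec w)
      (MeasureTheory.Measure.pi fun _ : Fin d => ProbabilityTheory.gaussianReal 0 1))
    {y | ∀ i, y i ≤ z i}).toReal

namespace CHT

open MeasureTheory ProbabilityTheory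

/-! ### Gaussian measure: shifts, densities, sums -/

/-- The standard Gaussian measure on `ℝ^d`. -/
noncomputable abbrev gaussPi (d : ℕ) : Measure (Fin d → ℝ) :=
  Measure.pi fun _ : Fin d => gaussianReal 0 1

/-- Densities multiply under finite products of measures. -/
lemma pi_withDensity_ofReal {d : ℕ} (μ : Fin d → Measure ℝ) [∀ i, SigmaFinite (μ i)]
    (f : Fin d → ℝ → ℝ) (hf0 : ∀ i x, 0 ≤ f i x)
    (hfi : ∀ i, Integrable (f i) (μ i)) :
    Measure.pi (fun i => (μ i).withDensity fun x => ENNReal.ofReal (f i x)) =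
      (Measure.pi μ).withDensity fun v => ENNReal.ofReal (∏ i, f i (v i)) := by
  have hfin : ∀ i, IsFiniteMeasure ((μ i).withDensity fun x => ENNReal.ofReal (f i x)) :=
    fun i => isFiniteMeasure_withDensity_ofReal (hfi i).2
  refine Measure.pi_eq fun s hs => ?_
  rw [withDensity_apply _ (MeasurableSet.univ_pi hs)]
  have h1 : ∀ i, ((μ i).withDensity fun x => ENNReal.ofReal (f i x)) (s i) =
      ENNReal.ofReal (∫ x, (s i).indicator (f i) x ∂(μ i)) := by
    intro i
    rw [withDensity_apply _ (hs i), integral_indicator (hs i),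
      ofReal_integral_eq_lintegral_ofReal (hfi i).integrableOn
        (Filter.Eventually.of_forall (hf0 i))]
  have h0 : ∀ i x, 0 ≤ (s i).indicator (f i) x := fun i x =>
    Set.indicator_nonneg (fun y _ => hf0 i y) x
  rw [Finset.prod_congr rfl fun i _ => h1 i,
    ← ENNReal.ofReal_prod_of_nonneg fun i _ => integral_nonneg (h0 i),
    ← integral_fintype_prod_eq_prod, ofReal_integral_eq_lintegral_ofReal,
    ← lintegral_indicator (MeasurableSet.univ_pi hs)]
  · refine lintegral_congr fun v => ?_
    by_cases hv : v ∈ Set.univ.pi s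
    · rw [Set.indicator_of_mem hv]
      congr 1
      exact Finset.prod_congr rfl fun i _ => (Set.indicator_of_mem (hv i trivial) _).symm
    · rw [Set.indicator_of_notMem hv]
      simp only [Set.mem_pi, not_forall] at hv
      obtain ⟨i, -, hi⟩ := hv
      rw [Finset.prod_eq_zero (Finset.mem_univ i) (Set.indicator_of_notMem hi _)]
      simp
  · exact Integrable.fintype_prod_dep fun i => (hfi i).indicator (hs i)
  · exact Filter.Eventually.of_forall fun v => Finset.prod_nonneg fun i _ => h0 i _

/-- One-dimensional Cameron–Martin formula. -/
lemma gaussianReal_shift (u : ℝ) :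
    gaussianReal u 1 =
      (gaussianReal 0 1).withDensity fun x => ENNReal.ofReal (Real.exp (u * x - u ^ 2 / 2)) := by
  rw [gaussianReal_of_var_ne_zero _ one_ne_zero, gaussianReal_of_var_ne_zero _ one_ne_zero,
    ← withDensity_mul _ (measurable_gaussianPDF _ _) (by fun_prop)]
  congr 1
  ext x
  rw [Pi.mul_apply, gaussianPDF, gaussianPDF, ← ENNReal.ofReal_mul (gaussianPDFReal_nonneg _ _ _)]
  congr 1
  simp only [gaussianPDFReal]
  rw [mul_assoc _ (Real.exp _) (Real.exp _), ← Real.exp_add]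
  congr 2
  simp
  ring

lemma gaussPi_map_add {d : ℕ} (u : Fin d → ℝ) :
    (gaussPi d).map (fun v => u + v) = (gaussPi d).withDensity
      fun v => ENNReal.ofReal (Real.exp (∑ i, u i * v i - (∑ i, u i ^ 2) / 2)) := by
  have h1 : (gaussPi d).map (fun v => u + v) = Measure.pi fun i => gaussianReal (u i) 1 := by
    have := Measure.pi_map_pi (μ := fun _ : Fin d => gaussianReal 0 1)
      (f := fun i x => u i + x) (fun i => by fun_prop)
    simp only [gaussianReal_map_const_add, zero_add] at this
    exact this
  rw [h1]
  rw [show (fun i => gaussianReal (u i) 1) = _ from funext fun i => gaussianReal_shift (u i)]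
  rw [pi_withDensity_ofReal]
  · congr 1
    ext v
    rw [← Real.exp_sum, Finset.sum_sub_distrib, Finset.sum_div]
  · intros; positivity
  · intro i
    simp_rw [Real.exp_sub]
    exact (integrable_exp_mul_gaussianReal (u i)).div_const _

/-- Cameron–Martin formula for the standard Gaussian measure on `ℝ^d`. -/
lemma integral_gaussPi_add {d : ℕ} (u : Fin d → ℝ) {f : (Fin d → ℝ) → ℝ} (hf : Measurable f) :
    ∫ v, f (u + v) ∂(gaussPi d) =
      ∫ v, f v * Real.exp (∑ i, u i * v i - (∑ i, u i ^ 2) / 2) ∂(gaussPi d) := by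
  rw [← integral_map (φ := fun v => u + v) (by fun_prop) hf.aestronglyMeasurable,
    gaussPi_map_add, integral_withDensity_eq_integral_toReal_smul (by fun_prop) (by simp)]
  refine integral_congr_ae (Filter.Eventually.of_forall fun v => ?_)
  simp only [smul_eq_mul]
  rw [ENNReal.toReal_ofReal (Real.exp_pos _).le, mul_comm]

lemma integrable_exp_sum_abs {d : ℕ} (c : ℝ) :
    Integrable (fun v : Fin d → ℝ => Real.exp (c * ∑ i, |v i|)) (gaussPi d) := by
  have h : ∀ i : Fin d, Integrable (fun x : ℝ => Real.exp (c * |x|)) (gaussianReal 0 1) :=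
    fun _ => integrable_exp_mul_abs (integrable_exp_mul_gaussianReal c)
      (integrable_exp_mul_gaussianReal (-c))
  simpa only [Finset.mul_sum, Real.exp_sum] using Integrable.fintype_prod_dep h

lemma gaussPi_eq_withDensity (d : ℕ) :
    gaussPi d = (volume : Measure (Fin d → ℝ)).withDensity
      fun v => ENNReal.ofReal (∏ i, gaussianPDFReal 0 1 (v i)) := by
  rw [volume_pi, ← pi_withDensity_ofReal]
  · simp only [gaussPi, gaussianReal_of_var_ne_zero 0 (one_ne_zero (α := NNReal))]
    rfl
  · intros; exact gaussianPDFReal_nonneg _ _ _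
  · intros; exact integrable_gaussianPDFReal _ _

lemma gaussianPDFReal_le_one (x : ℝ) : gaussianPDFReal 0 1 x ≤ 1 := by
  rw [gaussianPDFReal]
  have h1 : Real.exp (-(x - 0) ^ 2 / (2 * ((1 : NNReal) : ℝ))) ≤ 1 := by
    rw [Real.exp_le_one_iff]
    have := sq_nonneg (x - 0)
    have h2 : (0 : ℝ) ≤ 2 * ((1 : NNReal) : ℝ) := by positivity
    exact div_nonpos_of_nonpos_of_nonneg (by linarith) h2
  have h2 : (√(2 * Real.pi * ((1 : NNReal) : ℝ)))⁻¹ ≤ 1 := by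
    apply inv_le_one_of_one_le₀
    rw [Real.one_le_sqrt]
    have := Real.pi_gt_three
    simp; linarith
  calc _ ≤ (1 : ℝ) * 1 := by gcongr
    _ = 1 := one_mul 1

lemma gaussPi_le_volume {d : ℕ} {s : Set (Fin d → ℝ)} (hs : MeasurableSet s) :
    gaussPi d s ≤ volume s := by
  rw [gaussPi_eq_withDensity, withDensity_apply _ hs]
  calc _ ≤ ∫⁻ _ in s, 1 := by
        refine lintegral_mono fun v => ?_
        rw [ENNReal.ofReal_le_one]
        exact Finset.prod_le_one (fun i _ => gaussianPDFReal_nonneg _ _ _)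
          fun i _ => gaussianPDFReal_le_one _
    _ = volume s := by simp

/-- On a bounded cube, the Gaussian measure dominates a multiple of the Lebesgue measure. -/
lemma volume_le_gaussPi (d : ℕ) (R : ℝ) :
    ∃ c : ℝ, 0 < c ∧ ∀ s : Set (Fin d → ℝ), MeasurableSet s → (∀ v ∈ s, ∀ i, |v i| ≤ R) →
      ENNReal.ofReal c * volume s ≤ gaussPi d s := by
  refine ⟨∏ _i : Fin d, gaussianPDFReal 0 1 R,
    Finset.prod_pos fun _ _ => gaussianPDFReal_pos _ _ _ one_ne_zero, fun s hs hR => ?_⟩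
  rw [gaussPi_eq_withDensity, withDensity_apply _ hs, ← setLIntegral_const]
  refine setLIntegral_mono' hs fun v hv => ?_
  refine ENNReal.ofReal_le_ofReal (Finset.prod_le_prod
    (fun i _ => gaussianPDFReal_nonneg _ _ _) fun i _ => ?_)
  rw [gaussianPDFReal, gaussianPDFReal]
  have h : (v i - 0) ^ 2 ≤ (R - 0) ^ 2 := by
    rw [sub_zero, sub_zero, ← sq_abs (v i)]
    exact pow_le_pow_left₀ (abs_nonneg _) (hR v hv i) 2
  gcongr

/-- Sums of independent scaled standard Gaussian vectors. -/
lemma gaussPi_prod_map {d : ℕ} (a b r : ℝ) (h : a ^ 2 + b ^ 2 = r ^ 2) :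
    ((gaussPi d).prod (gaussPi d)).map (fun p => a • p.1 + b • p.2) =
      (gaussPi d).map (fun v => r • v) := by
  have h1 : (gaussPi d).map (fun v => r • v) =
      Measure.pi fun _ => (gaussianReal 0 1).map (r * ·) :=
    Measure.pi_map_pi (μ := fun _ : Fin d => gaussianReal 0 1)
      (f := fun _ x => r * x) (fun i => by fun_prop)
  have h2 : (gaussianReal 0 1).map (r * ·) =
      ((gaussianReal 0 1).prod (gaussianReal 0 1)).map (fun p : ℝ × ℝ => a * p.1 + b * p.2) := by
    have h3 : ((gaussianReal 0 1).prod (gaussianReal 0 1)).map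
        (fun p : ℝ × ℝ => a * p.1 + b * p.2) =
        ((gaussianReal 0 1).map (a * ·)) ∗ ((gaussianReal 0 1).map (b * ·)) := by
      rw [Measure.conv, Measure.map_prod_map _ _ (by fun_prop) (by fun_prop),
        Measure.map_map (by fun_prop) (by fun_prop)]
      rfl
    rw [h3, gaussianReal_map_const_mul, gaussianReal_map_const_mul, gaussianReal_map_const_mul,
      gaussianReal_conv_gaussianReal]
    congr 1
    · ring
    · ext
      simp [h]
  rw [h1, h2, ← (measurePreserving_arrowProdEquivProdArrow ℝ ℝ (Fin d)
    (fun _ => gaussianReal 0 1) (fun _ => gaussianReal 0 1)).map_eq,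
    Measure.map_map (by fun_prop) (by fun_prop)]
  exact Measure.pi_map_pi (μ := fun _ : Fin d => (gaussianReal 0 1).prod (gaussianReal 0 1))
    (f := fun _ (p : ℝ × ℝ) => a * p.1 + b * p.2) (fun i => by fun_prop)

/-! ### Second-order expansion of Gaussian smoothing -/

/-- Second-order Taylor bound for the Gaussian density ratio `exp (a - q / 2)`. -/
lemma exp_taylor_small {a q b S : ℝ} (hS : 0 ≤ S) (hb0 : 0 ≤ b) (hb1 : b ≤ 1)
    (ha : |a| ≤ b * S) (hq0 : 0 ≤ q) (hq : q ≤ b ^ 2) :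
    |Real.exp (a - q / 2) - (1 + a + (a ^ 2 - q) / 2)| ≤ 7 * b ^ 3 * Real.exp (2 * (S + 1)) := by
  set y := a - q / 2 with hy
  have hbb : b ^ 2 ≤ b := by nlinarith
  have hyb : |y| ≤ b * (S + 1) := by
    calc |y| ≤ |a| + |q / 2| := abs_sub _ _
      _ = |a| + q / 2 := by rw [abs_of_nonneg (by positivity : 0 ≤ q / 2)]
      _ ≤ b * (S + 1) := by nlinarith
  have hyb' : |y| ≤ S + 1 := hyb.trans (by nlinarith)
  have h1 : |Real.exp y - (1 + y + y ^ 2 / 2)| ≤ |y| ^ 3 * Real.exp |y| := by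
    have := Complex.norm_exp_sub_sum_le_norm_mul_exp (y : ℂ) 3
    simp only [Finset.sum_range_succ, Finset.sum_range_zero] at this
    norm_num [Nat.factorial] at this
    have e : Complex.exp (y : ℂ) - (1 + (y : ℂ) + (y : ℂ) ^ 2 / 2) =
      ((Real.exp y - (1 + y + y ^ 2 / 2) : ℝ) : ℂ) := by push_cast; ring
    rw [e, Complex.norm_real, Real.norm_eq_abs] at this
    exact this
  have h2 : (S + 1) ^ 3 ≤ 6 * Real.exp (S + 1) := by
    have := Real.pow_div_factorial_le_exp (S + 1) (by positivity) 3
    norm_num [Nat.factorial] at this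
    linarith
  have h3 : |y| ^ 3 * Real.exp |y| ≤ 6 * b ^ 3 * Real.exp (2 * (S + 1)) := by
    calc |y| ^ 3 * Real.exp |y| ≤ (b * (S + 1)) ^ 3 * Real.exp (S + 1) := by gcongr
      _ = b ^ 3 * (S + 1) ^ 3 * Real.exp (S + 1) := by ring
      _ ≤ b ^ 3 * (6 * Real.exp (S + 1)) * Real.exp (S + 1) := by gcongr
      _ = 6 * b ^ 3 * (Real.exp (S + 1) * Real.exp (S + 1)) := by ring
      _ = _ := by rw [← Real.exp_add]; ring_nf
  have h4 : |- (a * q / 2) + q ^ 2 / 8| ≤ b ^ 3 * Real.exp (2 * (S + 1)) := by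
    have e1 : |a * q / 2| ≤ b ^ 3 * S / 2 := by
      rw [abs_div, abs_mul, abs_of_nonneg hq0, abs_of_pos (by norm_num : (0 : ℝ) < 2)]
      have : |a| * q ≤ b * S * b ^ 2 := by gcongr
      linarith [show b * S * b ^ 2 = b ^ 3 * S by ring]
    have e2 : |q ^ 2 / 8| ≤ b ^ 3 / 8 := by
      rw [abs_of_nonneg (by positivity)]
      have : q ^ 2 ≤ (b ^ 2) ^ 2 := by gcongr
      have : (b ^ 2) ^ 2 ≤ b ^ 3 := by
        rw [← pow_mul]; exact pow_le_pow_of_le_one hb0 hb1 (by norm_num)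
      linarith
    have e3 : 2 * (S + 1) + 1 ≤ Real.exp (2 * (S + 1)) := Real.add_one_le_exp _
    have e4 : 0 ≤ b ^ 3 := by positivity
    calc _ ≤ |-(a * q / 2)| + |q ^ 2 / 8| := abs_add_le _ _
      _ ≤ b ^ 3 * S / 2 + b ^ 3 / 8 := by rw [abs_neg]; linarith
      _ ≤ b ^ 3 * (2 * (S + 1) + 1) := by nlinarith [mul_nonneg e4 hS]
      _ ≤ _ := by gcongr
  calc |Real.exp y - (1 + a + (a ^ 2 - q) / 2)|
      = |(Real.exp y - (1 + y + y ^ 2 / 2)) + (- (a * q / 2) + q ^ 2 / 8)| := by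
        congr 1; rw [hy]; ring
    _ ≤ _ := abs_add_le _ _
    _ ≤ 7 * b ^ 3 * Real.exp (2 * (S + 1)) := by linarith

/-- Counterpart of `exp_taylor_small` for shifts of size `b ≥ 1`: the Taylor polynomial is itself
of cubic order, so the exponential can be kept as an error term; it integrates to `1`. -/
lemma exp_taylor_large {a q b S : ℝ} (hS : 0 ≤ S) (hb1 : 1 ≤ b)
    (ha : |a| ≤ b * S) (hq0 : 0 ≤ q) (hq : q ≤ b ^ 2) :
    |Real.exp (a - q / 2) - (1 + a + (a ^ 2 - q) / 2)| ≤
      Real.exp (a - q / 2) + 7 * b ^ 3 * Real.exp (2 * (S + 1)) := by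
  have h0 : |1 + a + (a ^ 2 - q) / 2| ≤ 7 * b ^ 3 * Real.exp (2 * (S + 1)) := by
    have e1 : a ^ 2 ≤ b ^ 2 * S ^ 2 := by
      rw [← sq_abs, ← mul_pow]; gcongr
    have e2 : b ^ 2 ≤ b ^ 3 := pow_le_pow_right₀ hb1 (by norm_num)
    have e3 : b ≤ b ^ 3 := by nlinarith [sq_nonneg b]
    have e5 : 1 + S + S ^ 2 / 2 ≤ Real.exp (2 * (S + 1)) :=
      (Real.quadratic_le_exp_of_nonneg hS).trans (Real.exp_le_exp.2 (by linarith))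
    have e6 : b * S ≤ b ^ 3 * S := by gcongr
    have e7 : b ^ 2 * S ^ 2 ≤ b ^ 3 * S ^ 2 := by gcongr
    calc |1 + a + (a ^ 2 - q) / 2| ≤ b ^ 3 + b ^ 3 * S + (b ^ 3 * S ^ 2 + b ^ 3) / 2 := by
          have := abs_le.1 ha
          rw [abs_le]
          constructor <;> nlinarith [sq_nonneg a]
      _ ≤ 7 * b ^ 3 * (1 + S + S ^ 2 / 2) := by
          have : 0 ≤ b ^ 3 := by positivity
          nlinarith [mul_nonneg this hS, mul_nonneg this (sq_nonneg S)]
      _ ≤ _ := by gcongr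
  calc _ ≤ |Real.exp (a - q / 2)| + |1 + a + (a ^ 2 - q) / 2| := abs_sub _ _
    _ ≤ _ := by rw [abs_of_pos (Real.exp_pos _)]; linarith

lemma sum_sq_le_sq_sum_abs {d : ℕ} (u : Fin d → ℝ) : ∑ i, u i ^ 2 ≤ (∑ i, |u i|) ^ 2 := by
  simp_rw [← sq_abs (u _)]
  exact Finset.sum_sq_le_sq_sum_of_nonneg fun i _ => abs_nonneg _

lemma abs_sum_mul_le {d : ℕ} (u v : Fin d → ℝ) :
    |∑ i, u i * v i| ≤ (∑ i, |u i|) * ∑ i, |v i| := by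
  calc |∑ i, u i * v i| ≤ ∑ i, |u i| * |v i| := by
        simpa only [abs_mul] using Finset.abs_sum_le_sum_abs (fun i => u i * v i) Finset.univ
    _ ≤ ∑ i, |u i| * ∑ j, |v j| := by
        gcongr with i
        exact Finset.single_le_sum (fun j _ => abs_nonneg (v j)) (Finset.mem_univ i)
    _ = _ := by rw [Finset.sum_mul]

lemma integrable_gaussPi_of_le {d : ℕ} {f : (Fin d → ℝ) → ℝ} (hf : Measurable f) (c K : ℝ)
    (h : ∀ v, |f v| ≤ K * Real.exp (c * ∑ i, |v i|)) : Integrable f (gaussPi d) :=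
  ((integrable_exp_sum_abs c).const_mul K).mono' hf.aestronglyMeasurable
    (Filter.Eventually.of_forall h)

lemma le_exp_sum_abs {d : ℕ} (v : Fin d → ℝ) (i : Fin d) :
    |v i| ≤ Real.exp (1 * ∑ i, |v i|) := by
  have h1 := Finset.single_le_sum (f := fun i => |v i|) (fun j _ => abs_nonneg (v j))
    (Finset.mem_univ i)
  have h2 := Real.add_one_le_exp (∑ i, |v i|)
  rw [one_mul]
  linarith

lemma integrable_coord {d : ℕ} (i : Fin d) : Integrable (fun v : Fin d → ℝ => v i) (gaussPi d) :=
  integrable_gaussPi_of_le (by fun_prop) 1 1 fun v => by rw [one_mul]; exact le_exp_sum_abs v i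

lemma integrable_coord_mul {d : ℕ} (i j : Fin d) :
    Integrable (fun v : Fin d → ℝ => v i * v j) (gaussPi d) :=
  integrable_gaussPi_of_le (by fun_prop) 2 1 fun v => by
    have h := mul_le_mul (le_exp_sum_abs v i) (le_exp_sum_abs v j) (abs_nonneg _)
      (Real.exp_pos _).le
    rw [← Real.exp_add] at h
    rw [abs_mul, one_mul]
    refine h.trans_eq ?_
    congr 1
    ring

lemma integrable_bdd_mul {d : ℕ} {g h : (Fin d → ℝ) → ℝ} (hg : Measurable g) {δ : ℝ}
    (hδ : ∀ v, |g v| ≤ δ) (hh : Integrable h (gaussPi d)) :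
    Integrable (fun v => g v * h v) (gaussPi d) :=
  hh.bdd_mul hg.aestronglyMeasurable (Filter.Eventually.of_forall hδ)

lemma integrable_shift_density {d : ℕ} (u : Fin d → ℝ) :
    Integrable (fun v : Fin d → ℝ => Real.exp (∑ i, u i * v i - (∑ i, u i ^ 2) / 2))
      (gaussPi d) :=
  integrable_gaussPi_of_le (by fun_prop) (∑ i, |u i|) 1 fun v => by
    rw [one_mul, abs_of_pos (Real.exp_pos _), Real.exp_le_exp]
    have h1 := (abs_le.1 (abs_sum_mul_le u v)).2
    have h2 : 0 ≤ ∑ i, u i ^ 2 := Finset.sum_nonneg fun i _ => sq_nonneg _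
    linarith

/-- The Gaussian density ratio is approximated in `L¹` by its second-order Taylor polynomial in
the shift `u`, with an error cubic in `u`. -/
lemma integral_density_sub_taylor (d : ℕ) : ∃ C : ℝ, 0 ≤ C ∧ ∀ u : Fin d → ℝ,
    ∫ v, |Real.exp (∑ i, u i * v i - (∑ i, u i ^ 2) / 2) -
      (1 + ∑ i, u i * v i + ((∑ i, u i * v i) ^ 2 - ∑ i, u i ^ 2) / 2)| ∂(gaussPi d) ≤
      C * (∑ i, |u i|) ^ 3 := by
  set E : ℝ := ∫ v : Fin d → ℝ, Real.exp (2 * ((∑ i, |v i|) + 1)) ∂(gaussPi d)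
  have hEi : Integrable (fun v : Fin d → ℝ => Real.exp (2 * ((∑ i, |v i|) + 1))) (gaussPi d) := by
    have := (integrable_exp_sum_abs (d := d) 2).mul_const (Real.exp 2)
    simpa only [← Real.exp_add, mul_add, mul_one] using this
  have hE0 : 0 ≤ E := integral_nonneg fun v => (Real.exp_pos _).le
  refine ⟨7 * E + 1, by positivity, fun u => ?_⟩
  have hS : ∀ v : Fin d → ℝ, 0 ≤ ∑ i, |v i| := fun v => Finset.sum_nonneg fun i _ => abs_nonneg _
  have hq0 : 0 ≤ ∑ i, u i ^ 2 := Finset.sum_nonneg fun i _ => sq_nonneg _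
  rcases le_total (∑ i, |u i|) 1 with hb | hb
  · calc _ ≤ ∫ v, 7 * (∑ i, |u i|) ^ 3 * Real.exp (2 * ((∑ i, |v i|) + 1)) ∂(gaussPi d) := by
          refine integral_mono_of_nonneg (Filter.Eventually.of_forall fun v => abs_nonneg _)
            (hEi.const_mul _) (Filter.Eventually.of_forall fun v => ?_)
          exact exp_taylor_small (hS v) (hS u) hb (abs_sum_mul_le u v) hq0 (sum_sq_le_sq_sum_abs u)
      _ = 7 * (∑ i, |u i|) ^ 3 * E := integral_const_mul _ _
      _ ≤ _ := by
          have := pow_nonneg (hS u) 3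
          linarith
  · have h1 : ∫ v : Fin d → ℝ, Real.exp (∑ i, u i * v i - (∑ i, u i ^ 2) / 2) ∂(gaussPi d) = 1 := by
      have := integral_gaussPi_add u (f := fun _ => 1) measurable_const
      simpa using this.symm
    calc _ ≤ ∫ v, (Real.exp (∑ i, u i * v i - (∑ i, u i ^ 2) / 2) +
            7 * (∑ i, |u i|) ^ 3 * Real.exp (2 * ((∑ i, |v i|) + 1))) ∂(gaussPi d) := by
          refine integral_mono_of_nonneg (Filter.Eventually.of_forall fun v => abs_nonneg _)
            ((integrable_shift_density u).add (hEi.const_mul _))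
            (Filter.Eventually.of_forall fun v => ?_)
          exact exp_taylor_large (hS v) hb (abs_sum_mul_le u v) hq0 (sum_sq_le_sq_sum_abs u)
      _ = 1 + 7 * (∑ i, |u i|) ^ 3 * E := by
          rw [integral_add (integrable_shift_density u) (hEi.const_mul _), h1, integral_const_mul]
      _ ≤ _ := by
          have := one_le_pow₀ hb (n := 3)
          linarith

/-- Second-order expansion of a Gaussian smoothing of a bounded function. The coefficients are the
integrals of `g` against Hermite polynomials, so no regularity of `g` is needed. -/
lemma gaussPi_smooth_taylor (d : ℕ) : ∃ C : ℝ, 0 ≤ C ∧ ∀ (g : (Fin d → ℝ) → ℝ) (δ : ℝ),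
    Measurable g → (∀ v, |g v| ≤ δ) →
    ∃ (c₀ : ℝ) (c₁ : Fin d → ℝ) (c₂ : Fin d → Fin d → ℝ), ∀ u : Fin d → ℝ,
      |∫ v, g (u + v) ∂(gaussPi d) -
        (c₀ + ∑ i, c₁ i * u i + ∑ i, ∑ j, c₂ i j * (u i * u j))| ≤
        C * δ * (∑ i, |u i|) ^ 3 := by
  obtain ⟨C, hC0, hC⟩ := integral_density_sub_taylor d
  refine ⟨C, hC0, fun g δ hg hδ => ?_⟩
  refine ⟨∫ v, g v ∂(gaussPi d), fun i => ∫ v, g v * v i ∂(gaussPi d),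
    fun i j => ∫ v, g v * ((v i * v j - if i = j then 1 else 0) / 2) ∂(gaussPi d), fun u => ?_⟩
  have hδ0 : 0 ≤ δ := (abs_nonneg _).trans (hδ 0)
  have i0 : Integrable (fun v => g v) (gaussPi d) := by
    simpa using integrable_bdd_mul hg hδ (integrable_const (1 : ℝ))
  have i1 : ∀ i, Integrable (fun v => g v * v i) (gaussPi d) := fun i =>
    integrable_bdd_mul hg hδ (integrable_coord i)
  have i2 : ∀ i j, Integrable
      (fun v => g v * ((v i * v j - if i = j then 1 else 0) / 2)) (gaussPi d) := fun i j =>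
    integrable_bdd_mul hg hδ (((integrable_coord_mul i j).sub (integrable_const _)).div_const 2)
  have i1' := integrable_finsetSum Finset.univ fun i (_ : i ∈ Finset.univ) => (i1 i).mul_const (u i)
  have i2' := integrable_finsetSum Finset.univ fun i (_ : i ∈ Finset.univ) =>
    integrable_finsetSum Finset.univ fun j (_ : j ∈ Finset.univ) => (i2 i j).mul_const (u i * u j)
  have e : (∫ v, g v ∂(gaussPi d)) + ∑ i, (∫ v, g v * v i ∂(gaussPi d)) * u i +
      ∑ i, ∑ j, (∫ v, g v * ((v i * v j - if i = j then 1 else 0) / 2) ∂(gaussPi d)) *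
        (u i * u j) = ∫ v, g v * (1 + ∑ i, u i * v i +
          ((∑ i, u i * v i) ^ 2 - ∑ i, u i ^ 2) / 2) ∂(gaussPi d) := by
    simp_rw [← integral_mul_const]
    rw [← integral_finsetSum _ fun i _ => (i1 i).mul_const (u i)]
    rw [Finset.sum_congr rfl fun i _ => (integral_finsetSum Finset.univ
      fun j _ => (i2 i j).mul_const (u i * u j)).symm]
    rw [← integral_finsetSum _ fun i _ => integrable_finsetSum Finset.univ
      fun j (_ : j ∈ Finset.univ) => (i2 i j).mul_const (u i * u j)]
    rw [← integral_add i0 i1',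
      ← integral_add (f := fun v => g v + ∑ i, g v * v i * u i) (i0.add i1') i2']
    refine integral_congr_ae (Filter.Eventually.of_forall fun v => ?_)
    simp only
    have s1 : ∑ i, g v * v i * u i = g v * ∑ i, u i * v i := by
      rw [Finset.mul_sum]; exact Finset.sum_congr rfl fun i _ => by ring
    have s2 : ∑ i, ∑ j, g v * ((v i * v j - if i = j then 1 else 0) / 2) * (u i * u j) =
        g v * (((∑ i, u i * v i) ^ 2 - ∑ i, u i ^ 2) / 2) := by
      have : ∀ i j, g v * ((v i * v j - if i = j then 1 else 0) / 2) * (u i * u j) =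
          g v / 2 * ((u i * v i) * (u j * v j)) - g v / 2 * (if i = j then u i * u j else 0) := by
        intro i j; split_ifs <;> ring
      simp_rw [this, Finset.sum_sub_distrib, ← Finset.mul_sum, ← Finset.sum_mul]
      simp only [Finset.sum_ite_eq, Finset.mem_univ, if_true]
      ring_nf
    rw [s1, s2]
    ring
  have ipol : Integrable (fun v : Fin d → ℝ => 1 + ∑ i, u i * v i +
      ((∑ i, u i * v i) ^ 2 - ∑ i, u i ^ 2) / 2) (gaussPi d) := by
    have j1 : Integrable (fun v : Fin d → ℝ => ∑ i, u i * v i) (gaussPi d) :=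
      integrable_finsetSum Finset.univ fun i _ => (integrable_coord i).const_mul (u i)
    have j2 : Integrable (fun v : Fin d → ℝ => (∑ i, u i * v i) ^ 2) (gaussPi d) := by
      have : (fun v : Fin d → ℝ => (∑ i, u i * v i) ^ 2) =
          fun v => ∑ i, ∑ j, (u i * u j) * (v i * v j) := by
        ext v
        rw [sq, Finset.sum_mul_sum]
        exact Finset.sum_congr rfl fun i _ => Finset.sum_congr rfl fun j _ => by ring
      rw [this]
      exact integrable_finsetSum Finset.univ fun i _ => integrable_finsetSum Finset.univ fun j _ =>
        (integrable_coord_mul i j).const_mul _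
    exact ((integrable_const _).add j1).add ((j2.sub (integrable_const _)).div_const 2)
  have ip := integrable_bdd_mul hg hδ ipol
  have ie := integrable_bdd_mul hg hδ (integrable_shift_density u)
  rw [e, integral_gaussPi_add u hg, ← integral_sub ie ip]
  simp_rw [← mul_sub]
  rw [← Real.norm_eq_abs]
  calc _ ≤ ∫ v, δ * |Real.exp (∑ i, u i * v i - (∑ i, u i ^ 2) / 2) -
      (1 + ∑ i, u i * v i + ((∑ i, u i * v i) ^ 2 - ∑ i, u i ^ 2) / 2)| ∂(gaussPi d) := by
        refine norm_integral_le_of_norm_le ?_ (Filter.Eventually.of_forall fun v => ?_)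
        · exact (((integrable_shift_density u).sub ipol).abs).const_mul δ
        · rw [norm_mul]
          exact mul_le_mul_of_nonneg_right (hδ v) (norm_nonneg _)
    _ ≤ δ * (C * (∑ i, |u i|) ^ 3) := by
        rw [integral_const_mul]
        exact mul_le_mul_of_nonneg_left (hC u) hδ0
    _ = _ := by ring

/-! ### Convolution powers, exchange steps, smoothing inequality -/

/-- The `n`-fold convolution power of a measure, i.e. the law of a sum of `n` independent
vectors with law `ν`. -/
noncomputable def convPow {k : ℕ} (ν : Measure (Fin k → ℝ)) : ℕ → Measure (Fin k → ℝ)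
  | 0 => Measure.dirac 0
  | n + 1 => convPow ν n ∗ ν

instance {k : ℕ} (ν : Measure (Fin k → ℝ)) [IsProbabilityMeasure ν] (n : ℕ) :
    IsProbabilityMeasure (convPow ν n) := by
  induction n with
  | zero => rw [convPow]; infer_instance
  | succ n ih => rw [convPow]; infer_instance

lemma measurable_real_Iic_sub {k : ℕ} (μ : Measure (Fin k → ℝ)) [IsProbabilityMeasure μ]
    (z : Fin k → ℝ) : Measurable fun y => μ.real (Set.Iic (z - y)) := by
  have hs : MeasurableSet {p : (Fin k → ℝ) × (Fin k → ℝ) | p.2 ≤ z - p.1} :=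
    measurableSet_le (by fun_prop) (by fun_prop)
  exact (measurable_measure_prodMk_left (ν := μ) hs).ennreal_toReal

lemma real_conv_Iic {k : ℕ} (μ ρ : Measure (Fin k → ℝ)) [IsProbabilityMeasure μ]
    [IsProbabilityMeasure ρ] (z : Fin k → ℝ) :
    (μ ∗ ρ).real (Set.Iic z) = ∫ y, μ.real (Set.Iic (z - y)) ∂ρ := by
  have hs : MeasurableSet {p : (Fin k → ℝ) × (Fin k → ℝ) | p.1 + p.2 ≤ z} :=
    measurableSet_le (by fun_prop) (by fun_prop)
  rw [Measure.conv_comm, Measure.conv, measureReal_def, Measure.map_apply (by fun_prop) measurableSet_Iic]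
  have : (fun x : (Fin k → ℝ) × (Fin k → ℝ) => x.1 + x.2) ⁻¹' Set.Iic z =
    {p | p.1 + p.2 ≤ z} := rfl
  rw [this, Measure.prod_apply hs, ← integral_toReal
    (measurable_measure_prodMk_left hs).aemeasurable
    (Filter.Eventually.of_forall fun x => measure_lt_top _ _)]
  refine integral_congr_ae (Filter.Eventually.of_forall fun y => ?_)
  simp only [measureReal_def]
  congr 2
  ext x
  simp [le_sub_iff_add_le, add_comm]

lemma integrable_of_bdd {k : ℕ} (ρ : Measure (Fin k → ℝ)) [IsProbabilityMeasure ρ]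
    {f : (Fin k → ℝ) → ℝ} (hf : Measurable f) {δ : ℝ} (hδ : ∀ x, |f x| ≤ δ) : Integrable f ρ :=
  Integrable.of_bound hf.aestronglyMeasurable δ (Filter.Eventually.of_forall hδ)

lemma abs_measureReal_le_one {k : ℕ} (μ : Measure (Fin k → ℝ)) [IsProbabilityMeasure μ]
    (s : Set (Fin k → ℝ)) : |μ.real s| ≤ 1 := by
  rw [abs_of_nonneg measureReal_nonneg]; exact measureReal_le_one

/-- One Lindeberg exchange step: replacing one summand of law `ν` by a Gaussian one, in the
presence of Gaussian noise of variance `t`. The error splits into a term for the distance `δ`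
between the law `μ` of the remaining summands and its Gaussian counterpart `G i`, and a term
where the remaining summands are already Gaussian, so that the noise has variance `t + i`. -/
lemma exchange_step {k : ℕ} (ν : Measure (Fin k → ℝ)) [IsProbabilityMeasure ν]
    (G : ℝ → Measure (Fin k → ℝ)) (hGp : ∀ t, IsProbabilityMeasure (G t))
    (hGadd : ∀ a b, 0 ≤ a → 0 ≤ b → G a ∗ G b = G (a + b)) {C : ℝ}
    (hC : ∀ t : ℝ, 0 < t → ∀ (f : (Fin k → ℝ) → ℝ) (δ : ℝ), Measurable f → (∀ x, |f x| ≤ δ) →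
      |∫ x, f x ∂(ν ∗ G t) - ∫ x, f x ∂(G 1 ∗ G t)| ≤ C * δ / √t ^ 3)
    (μ : Measure (Fin k → ℝ)) [IsProbabilityMeasure μ] (i : ℝ) (hi : 0 ≤ i) (δ : ℝ)
    (hδ : ∀ z, |μ.real (Set.Iic z) - (G i).real (Set.Iic z)| ≤ δ) (t : ℝ) (ht : 0 < t)
    (z : Fin k → ℝ) :
    |(μ ∗ (ν ∗ G t)).real (Set.Iic z) - (μ ∗ (G 1 ∗ G t)).real (Set.Iic z)| ≤
      C * δ / √t ^ 3 + C / √(t + i) ^ 3 := by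
  have hgG : ∀ ρ : Measure (Fin k → ℝ), IsProbabilityMeasure ρ →
      ∫ y, (G i).real (Set.Iic (z - y)) ∂(ρ ∗ G t) =
        ∫ x, (Set.Iic z).indicator 1 x ∂(ρ ∗ G (t + i)) := by
    intro ρ hρ
    rw [← real_conv_Iic, integral_indicator_one measurableSet_Iic, Measure.conv_comm,
      Measure.conv_assoc, hGadd t i ht.le hi]
  have hsplit : ∀ ρ : Measure (Fin k → ℝ), IsProbabilityMeasure ρ →
      (μ ∗ (ρ ∗ G t)).real (Set.Iic z) =
        ∫ y, (μ.real (Set.Iic (z - y)) - (G i).real (Set.Iic (z - y))) ∂(ρ ∗ G t) +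
        ∫ x, (Set.Iic z).indicator 1 x ∂(ρ ∗ G (t + i)) := by
    intro ρ hρ
    rw [← hgG ρ hρ, real_conv_Iic, integral_sub, sub_add_cancel]
    · exact integrable_of_bdd _ (measurable_real_Iic_sub μ z) fun x => abs_measureReal_le_one _ _
    · exact integrable_of_bdd _ (measurable_real_Iic_sub (G i) z)
        fun x => abs_measureReal_le_one _ _
  rw [hsplit ν inferInstance, hsplit (G 1) inferInstance]
  have h1 := hC t ht (fun y => μ.real (Set.Iic (z - y)) - (G i).real (Set.Iic (z - y))) δ
    ((measurable_real_Iic_sub μ z).sub (measurable_real_Iic_sub (G i) z)) (fun y => hδ _)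
  have h2 := hC (t + i) (by linarith) ((Set.Iic z).indicator 1) 1
    (measurable_one.indicator measurableSet_Iic) (fun x => by
      by_cases hx : x ∈ Set.Iic z
      · rw [Set.indicator_of_mem hx]; simp
      · rw [Set.indicator_of_notMem hx]; simp)
  rw [mul_one] at h2
  rw [add_sub_add_comm]
  exact (abs_add_le _ _).trans (add_le_add h1 h2)

/-- Smoothing inequality: the uniform distance of distribution functions is controlled by the
distance after convolution with a noise `ρ` that lies in the cube of radius `r` with probability
at least `3 / 4`, when the second distribution function varies by at most `ℓ` over `2 * r`. -/
lemma smoothing_ineq {k : ℕ} (μ g ρ : Measure (Fin k → ℝ)) [IsProbabilityMeasure μ]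
    [IsProbabilityMeasure g] [IsProbabilityMeasure ρ] (r ℓ a : ℝ)
    (hρ : ρ.real {y | ∀ i, |y i| ≤ r}ᶜ ≤ 1 / 4)
    (hg : ∀ z, g.real (Set.Iic (z + fun _ => 2 * r)) ≤ g.real (Set.Iic z) + ℓ)
    (ha : ∀ z, |(μ ∗ ρ).real (Set.Iic z) - (g ∗ ρ).real (Set.Iic z)| ≤ a) (z : Fin k → ℝ) :
    |μ.real (Set.Iic z) - g.real (Set.Iic z)| ≤ 2 * a + 2 * ℓ := by
  set Δ : (Fin k → ℝ) → ℝ := fun z => μ.real (Set.Iic z) - g.real (Set.Iic z) with hΔ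
  have hΔ1 : ∀ z, |Δ z| ≤ 1 := by
    intro z
    have h1 : μ.real (Set.Iic z) ≤ 1 := measureReal_le_one
    have h2 : g.real (Set.Iic z) ≤ 1 := measureReal_le_one
    have h3 : 0 ≤ μ.real (Set.Iic z) := measureReal_nonneg
    have h4 : 0 ≤ g.real (Set.Iic z) := measureReal_nonneg
    rw [abs_le]; constructor <;> simp only [hΔ] <;> linarith
  set δ : ℝ := ⨆ z, |Δ z| with hδ
  have hbdd : BddAbove (Set.range fun z => |Δ z|) := ⟨1, by rintro _ ⟨z, rfl⟩; exact hΔ1 z⟩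
  have hle : ∀ z, |Δ z| ≤ δ := fun z => le_ciSup hbdd z
  set S : Set (Fin k → ℝ) := {y | ∀ i, |y i| ≤ r}ᶜ with hS
  have hSm : MeasurableSet S := by
    refine MeasurableSet.compl ?_
    simp only [Set.ofPred_forall]
    exact MeasurableSet.iInter fun i => measurableSet_le (by fun_prop) (by fun_prop)
  have hΔm : ∀ z, Measurable fun y => Δ (z - y) := fun z =>
    (measurable_real_Iic_sub μ z).sub (measurable_real_Iic_sub g z)
  have hΔi : ∀ z, Integrable (fun y => Δ (z - y)) ρ := fun z =>
    integrable_of_bdd ρ (hΔm z) fun y => hΔ1 _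
  have hconv : ∀ z, |∫ y, Δ (z - y) ∂ρ| ≤ a := by
    intro z
    have := ha z
    rw [real_conv_Iic, real_conv_Iic, ← integral_sub] at this
    · exact this
    · exact integrable_of_bdd _ (measurable_real_Iic_sub μ z) fun x => abs_measureReal_le_one _ _
    · exact integrable_of_bdd _ (measurable_real_Iic_sub g z) fun x => abs_measureReal_le_one _ _
  have hδ0 : 0 ≤ δ := (abs_nonneg _).trans (hle 0)
  have hindi : Integrable (S.indicator fun _ => 2 * δ) ρ :=
    (integrable_const _).indicator hSm
  have hind : ∫ y, S.indicator (fun _ => 2 * δ) y ∂ρ ≤ δ / 2 := by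
    rw [integral_indicator_const _ hSm, smul_eq_mul]
    nlinarith
  have hr : ∀ y, y ∉ S → ∀ i, -r ≤ y i ∧ y i ≤ r := by
    intro y hy i
    simp only [hS, Set.mem_compl_iff, not_not, Set.mem_ofPred_eq] at hy
    exact abs_le.1 (hy i)
  -- `Δ` decreases by at most `ℓ` over upward moves of size at most `2 * r`
  have hmono : ∀ z z' : Fin k → ℝ, z ≤ z' → z' ≤ z + (fun _ => 2 * r) →
      Δ z - ℓ ≤ Δ z' ∧ 0 ≤ ℓ := by
    intro z z' h1 h2
    have e1 : μ.real (Set.Iic z) ≤ μ.real (Set.Iic z') := measureReal_mono (Set.Iic_subset_Iic.2 h1)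
    have e2 : g.real (Set.Iic z') ≤ g.real (Set.Iic (z + fun _ => 2 * r)) :=
      measureReal_mono (Set.Iic_subset_Iic.2 h2)
    have e4 : g.real (Set.Iic z) ≤ g.real (Set.Iic z') := measureReal_mono (Set.Iic_subset_Iic.2 h1)
    have e3 := hg z
    constructor
    · simp only [hΔ]; linarith
    · linarith
  have hℓ : 0 ≤ ℓ ∨ ∀ y, y ∈ S := by
    by_cases h : ∀ y, y ∈ S
    · exact Or.inr h
    · push Not at h
      obtain ⟨y, hy⟩ := h
      refine Or.inl (hmono 0 0 le_rfl ?_).2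
      intro i
      have := hr y hy i
      simp; linarith
  have hℓ0 : 0 ≤ ℓ := by
    rcases hℓ with h | h
    · exact h
    · exfalso
      have : S = Set.univ := Set.eq_univ_of_forall h
      rw [this] at hρ
      simp at hρ
      norm_num at hρ
  -- Shift `z` by `∓ r`, so that noise inside the cube moves the point in one direction only. Outside
  -- the cube, of mass at most `1 / 4`, the loss is `2 * δ`; this costs `δ / 2` in total and is
  -- absorbed by the left side.
  have key : ∀ z, |Δ z| ≤ a + ℓ + δ / 2 := by
    intro z
    rw [abs_le]
    constructor
    · have h1 : ∀ y, Δ (z - (fun _ => r) - y) ≤ Δ z + ℓ + S.indicator (fun _ => 2 * δ) y := by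
        intro y
        by_cases hy : y ∈ S
        · rw [Set.indicator_of_mem hy]
          have := (abs_le.1 (hle z)).1
          have := (abs_le.1 (hle (z - (fun _ => r) - y))).2
          linarith
        · rw [Set.indicator_of_notMem hy]
          have := (hmono (z - (fun _ => r) - y) z (fun i => ?_) (fun i => ?_)).1
          · linarith
          · have := hr y hy i; simp; linarith
          · have := hr y hy i; simp; linarith
      have h2 : ∫ y, Δ (z - (fun _ => r) - y) ∂ρ ≤
          ∫ y, (Δ z + ℓ + S.indicator (fun _ => 2 * δ) y) ∂ρ :=
        integral_mono (hΔi _) ((integrable_const _).add hindi) h1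
      rw [integral_add (integrable_const _) hindi] at h2
      have h3 := (abs_le.1 (hconv (z - (fun _ => r)))).1
      rw [integral_const, probReal_univ, one_smul] at h2
      linarith
    · have h1 : ∀ y, Δ z - ℓ - S.indicator (fun _ => 2 * δ) y ≤ Δ (z + (fun _ => r) - y) := by
        intro y
        by_cases hy : y ∈ S
        · rw [Set.indicator_of_mem hy]
          have := (abs_le.1 (hle z)).2
          have := (abs_le.1 (hle (z + (fun _ => r) - y))).1
          linarith
        · rw [Set.indicator_of_notMem hy]
          have := (hmono z (z + (fun _ => r) - y) (fun i => ?_) (fun i => ?_)).1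
          · linarith
          · have := hr y hy i; simp; linarith
          · have := hr y hy i; simp; linarith
      have h2 : ∫ y, (Δ z - ℓ - S.indicator (fun _ => 2 * δ) y) ∂ρ ≤
          ∫ y, Δ (z + (fun _ => r) - y) ∂ρ :=
        integral_mono ((integrable_const _).sub hindi) (hΔi _) h1
      rw [integral_sub (integrable_const _) hindi] at h2
      have h3 := (abs_le.1 (hconv (z + (fun _ => r)))).2
      rw [integral_const, probReal_univ, one_smul] at h2
      linarith
  have hfin : δ ≤ a + ℓ + δ / 2 := ciSup_le key
  have := hle z
  linarith

/-- Tail sums of `x ^ (-3/2)`. -/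
lemma sum_inv_sqrt_cube_le (τ : ℝ) (hτ : 1 < τ) (n : ℕ) :
    ∑ j ∈ Finset.range n, 1 / √((j : ℝ) + τ) ^ 3 ≤ 2 / √(τ - 1) - 2 / √((n : ℝ) + τ - 1) := by
  induction n with
  | zero => simp
  | succ n ih =>
    rw [Finset.sum_range_succ]
    have e : ((n + 1 : ℕ) : ℝ) + τ - 1 = n + τ := by push_cast; ring
    rw [e]
    have hn : (0 : ℝ) ≤ n := Nat.cast_nonneg n
    set a := √((n : ℝ) + τ - 1) with ha
    set b := √((n : ℝ) + τ) with hb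
    have ha0 : 0 < a := Real.sqrt_pos.2 (by linarith)
    have hab : a ≤ b := Real.sqrt_le_sqrt (by linarith)
    have hb0 : 0 < b := ha0.trans_le hab
    have h2 : b ^ 2 - a ^ 2 = 1 := by
      rw [ha, hb, Real.sq_sqrt (by linarith), Real.sq_sqrt (by linarith)]; ring
    have h1 : 1 / b ^ 3 ≤ 2 / a - 2 / b := by
      rw [div_sub_div _ _ ha0.ne' hb0.ne', div_le_div_iff₀ (by positivity) (by positivity)]
      have h4 : (b - a) * (b + a) = 1 := by linarith [h2, show (b - a) * (b + a) = b ^ 2 - a ^ 2 by ring]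
      have h5 : 1 ≤ (b - a) * (2 * b) := by
        rw [← h4]; exact mul_le_mul_of_nonneg_left (by linarith) (by linarith)
      have h6 : b * a ≤ b ^ 2 := by nlinarith
      calc 1 * (a * b) ≤ 1 * b ^ 2 := by linarith
        _ ≤ (b - a) * (2 * b) * b ^ 2 := by gcongr
        _ = _ := by ring
    linarith

/-! ### An abstract Berry–Esseen bound -/

/-- Lindeberg telescoping: the summands of law `ν` are replaced one at a time by Gaussian ones, in
the presence of the noise `G τ`; `δ i` bounds the distance after `i` summands. -/
lemma telescope_bound {k : ℕ} (ν : Measure (Fin k → ℝ)) [IsProbabilityMeasure ν]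
    (G : ℝ → Measure (Fin k → ℝ)) (hGp : ∀ t, IsProbabilityMeasure (G t))
    (hGadd : ∀ a b, 0 ≤ a → 0 ≤ b → G a ∗ G b = G (a + b)) {C : ℝ}
    (hC : ∀ t : ℝ, 0 < t → ∀ (f : (Fin k → ℝ) → ℝ) (δ : ℝ), Measurable f → (∀ x, |f x| ≤ δ) →
      |∫ x, f x ∂(ν ∗ G t) - ∫ x, f x ∂(G 1 ∗ G t)| ≤ C * δ / √t ^ 3)
    (n : ℕ) (δ : ℕ → ℝ)
    (hδ : ∀ i < n, ∀ z, |(convPow ν i).real (Set.Iic z) - (G i).real (Set.Iic z)| ≤ δ i)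
    (τ : ℝ) (hτ : 0 < τ) (z : Fin k → ℝ) :
    |(convPow ν n ∗ G τ).real (Set.Iic z) - (G n ∗ G τ).real (Set.Iic z)| ≤
      ∑ i ∈ Finset.range n,
        (C * δ i / √((n : ℝ) - 1 - i + τ) ^ 3 + C / √((n : ℝ) - 1 + τ) ^ 3) := by
  set F : ℕ → ℝ := fun i => (convPow ν i ∗ G ((n : ℝ) - i + τ)).real (Set.Iic z) with hF
  have hstep : ∀ i ∈ Finset.range n, |F (i + 1) - F i| ≤
      C * δ i / √((n : ℝ) - 1 - i + τ) ^ 3 + C / √((n : ℝ) - 1 + τ) ^ 3 := by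
    intro i hi
    have hi' : i < n := Finset.mem_range.1 hi
    have hin : (i : ℝ) + 1 ≤ n := by exact_mod_cast hi'
    have ht : (0 : ℝ) < (n : ℝ) - 1 - i + τ := by linarith
    have h := exchange_step ν G hGp hGadd hC (convPow ν i) i (Nat.cast_nonneg i) (δ i)
      (hδ i hi') _ ht z
    rw [hGadd 1 _ zero_le_one ht.le, ← Measure.conv_assoc] at h
    have e1 : (n : ℝ) - 1 - i + τ + i = n - 1 + τ := by ring
    have e2 : 1 + ((n : ℝ) - 1 - i + τ) = n - i + τ := by ring
    rw [e1, e2] at h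
    have e3 : F (i + 1) = ((convPow ν i ∗ ν) ∗ G ((n : ℝ) - 1 - i + τ)).real (Set.Iic z) := by
      simp only [hF, convPow]
      congr 3
      push_cast; ring
    rw [e3]
    exact h
  have hFn : (convPow ν n ∗ G τ).real (Set.Iic z) = F n := by simp [hF]
  have hF0 : (G n ∗ G τ).real (Set.Iic z) = F 0 := by
    simp only [hF, convPow]
    rw [hGadd _ _ (Nat.cast_nonneg n) hτ.le, Measure.dirac_zero_conv]
    simp
  rw [hFn, hF0, ← Finset.sum_range_sub]
  exact (Finset.abs_sum_le_sum_abs _ _).trans (Finset.sum_le_sum hstep)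

/-- The numerical heart of the induction: if the distance after `i < n` summands is at most
`min 1 (B / √i)`, the accumulated exchange errors are `O(1 / √n)`, with a `B`-coefficient
which is small when the variance `τ` of the smoothing noise is large. -/
lemma sum_errors_le {C B τ : ℝ} (hC : 0 ≤ C) (hB : 0 ≤ B) (hτ : 1 < τ) (n : ℕ) (hn : 1 ≤ n)
    (δ : ℕ → ℝ) (h0 : ∀ i, 0 ≤ δ i) (h1 : ∀ i, δ i ≤ 1)
    (h2 : ∀ i, 1 ≤ i → δ i ≤ B / √(i : ℝ)) :
    ∑ i ∈ Finset.range n,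
        (C * δ i / √((n : ℝ) - 1 - i + τ) ^ 3 + C / √((n : ℝ) - 1 + τ) ^ 3) ≤
      (4 * C + 4 * C * B / √(τ - 1)) / √(n : ℝ) := by
  have hn1 : (1 : ℝ) ≤ n := by exact_mod_cast hn
  set s := √(n : ℝ) with hs
  have hs0 : 0 < s := Real.sqrt_pos.2 (by linarith)
  have hs2 : s ^ 2 = n := Real.sq_sqrt (by linarith)
  have hterm : ∀ i ∈ Finset.range n,
      C * δ i / √((n : ℝ) - 1 - i + τ) ^ 3 + C / √((n : ℝ) - 1 + τ) ^ 3 ≤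
      4 * C / s ^ 3 + 2 * C * B / s * (1 / √((n : ℝ) - 1 - i + τ) ^ 3) := by
    intro i hi
    have hi' : i < n := Finset.mem_range.1 hi
    have hin : (i : ℝ) + 1 ≤ n := by exact_mod_cast hi'
    have hi0 : (0 : ℝ) ≤ i := Nat.cast_nonneg i
    set t := (n : ℝ) - 1 - i + τ with ht
    have ht0 : 0 < t := by linarith
    have hst : 0 < √t := Real.sqrt_pos.2 ht0
    have hsn : s ≤ √((n : ℝ) - 1 + τ) := Real.sqrt_le_sqrt (by linarith)
    have hb : C / √((n : ℝ) - 1 + τ) ^ 3 ≤ C / s ^ 3 := by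
      gcongr
    have ha : δ i / √t ^ 3 ≤ 3 / s ^ 3 + 2 * B / s * (1 / √t ^ 3) := by
      -- For `2 * i < n` the noise has variance at least `n / 2` and `δ i ≤ 1` suffices; otherwise
      -- `√i` is comparable to `√n` and the bound `B / √i` is used.
      rcases lt_or_ge (2 * i) n with h | h
      · have h' : (2 : ℝ) * i + 1 ≤ n := by exact_mod_cast h
        have hcmp : s ≤ √2 * √t := by
          rw [← Real.sqrt_mul (by norm_num)]
          exact Real.sqrt_le_sqrt (by linarith)
        have h23 : √2 ^ 3 ≤ 3 := by
          have e : √2 ^ 2 = (2 : ℝ) := Real.sq_sqrt (by norm_num)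
          have e2 : √2 ≤ 3 / 2 := by
            rw [Real.sqrt_le_left (by norm_num)]; norm_num
          nlinarith
        have h4 : s ^ 3 ≤ 3 * √t ^ 3 := by
          calc s ^ 3 ≤ (√2 * √t) ^ 3 := by gcongr
            _ = √2 ^ 3 * √t ^ 3 := by ring
            _ ≤ _ := by gcongr
        have h5 : δ i / √t ^ 3 ≤ 3 / s ^ 3 := by
          rw [div_le_div_iff₀ (by positivity) (by positivity)]
          nlinarith [h1 i, h0 i, pow_pos hst 3, pow_pos hs0 3]
        have : 0 ≤ 2 * B / s * (1 / √t ^ 3) := by positivity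
        linarith
      · have hi1 : 1 ≤ i := by omega
        have hi1' : (1 : ℝ) ≤ i := by exact_mod_cast hi1
        have h' : (n : ℝ) ≤ 2 * i := by exact_mod_cast h
        have hsi : 0 < √(i : ℝ) := Real.sqrt_pos.2 (by linarith)
        have h6 : s ≤ 2 * √(i : ℝ) := by
          rw [hs, Real.sqrt_le_left (by positivity), mul_pow, Real.sq_sqrt hi0]
          linarith
        have h7 : δ i ≤ 2 * B / s := by
          refine (h2 i hi1).trans ?_
          rw [div_le_div_iff₀ hsi hs0]
          nlinarith
        have h8 : δ i / √t ^ 3 ≤ 2 * B / s * (1 / √t ^ 3) := by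
          rw [mul_one_div]; gcongr
        have : 0 ≤ 3 / s ^ 3 := by positivity
        linarith
    calc _ ≤ C * (δ i / √t ^ 3) + C / s ^ 3 := by rw [mul_div_assoc]; gcongr
      _ ≤ C * (3 / s ^ 3 + 2 * B / s * (1 / √t ^ 3)) + C / s ^ 3 := by gcongr
      _ = _ := by ring
  refine (Finset.sum_le_sum hterm).trans ?_
  rw [Finset.sum_add_distrib, ← Finset.mul_sum, Finset.sum_const, Finset.card_range, nsmul_eq_mul,
    ← hs2]
  have hrefl : ∑ i ∈ Finset.range n, 1 / √((n : ℝ) - 1 - i + τ) ^ 3 =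
      ∑ j ∈ Finset.range n, 1 / √((j : ℝ) + τ) ^ 3 := by
    rw [← Finset.sum_range_reflect]
    refine Finset.sum_congr rfl fun i hi => ?_
    have hi' : i < n := Finset.mem_range.1 hi
    have : ((n - 1 - i : ℕ) : ℝ) = (n : ℝ) - 1 - i := by
      rw [Nat.cast_sub (by omega), Nat.cast_sub (by omega)]; simp
    rw [this]
    congr 4
    ring
  have hsum : ∑ i ∈ Finset.range n, 1 / √(s ^ 2 - 1 - i + τ) ^ 3 ≤ 2 / √(τ - 1) := by
    rw [hs2, hrefl]
    have := sum_inv_sqrt_cube_le τ hτ n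
    have h3 : 0 ≤ 2 / √((n : ℝ) + τ - 1) := by positivity
    linarith
  have hx : 0 < √(τ - 1) := Real.sqrt_pos.2 (by linarith)
  calc _ ≤ s ^ 2 * (4 * C / s ^ 3) + 2 * C * B / s * (2 / √(τ - 1)) := by gcongr
    _ = _ := by field_simp; ring

/-- A multivariate Berry–Esseen bound for lower orthants, in abstract form: `G` is a
convolution semigroup with tightness and anti-concentration at scale `√t`, and a single summand
of law `ν` may be exchanged for `G 1` at cost `O(t ^ (-3/2))` in the presence of noise `G t`. -/
lemma berry_esseen_abstract {k : ℕ} (ν : Measure (Fin k → ℝ)) [IsProbabilityMeasure ν]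
    (G : ℝ → Measure (Fin k → ℝ)) (hGp : ∀ t, IsProbabilityMeasure (G t))
    (hG0 : G 0 = Measure.dirac 0)
    (hGadd : ∀ a b, 0 ≤ a → 0 ≤ b → G a ∗ G b = G (a + b)) {C : ℝ} (hC0 : 0 ≤ C)
    (hC : ∀ t : ℝ, 0 < t → ∀ (f : (Fin k → ℝ) → ℝ) (δ : ℝ), Measurable f → (∀ x, |f x| ≤ δ) →
      |∫ x, f x ∂(ν ∗ G t) - ∫ x, f x ∂(G 1 ∗ G t)| ≤ C * δ / √t ^ 3)
    {L : ℝ} (hL0 : 0 ≤ L)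
    (hL : ∀ t > 0, ∀ h, 0 ≤ h → ∀ z,
      (G t).real (Set.Iic (z + fun _ => h)) ≤ (G t).real (Set.Iic z) + L * h / √t)
    {R : ℝ} (hR0 : 0 ≤ R)
    (hR : ∀ t > 0, (G t).real {y | ∀ i, |y i| ≤ R * √t}ᶜ ≤ 1 / 4) :
    ∃ B, 0 ≤ B ∧ ∀ n : ℕ, 1 ≤ n → ∀ z,
      |(convPow ν n).real (Set.Iic z) - (G n).real (Set.Iic z)| ≤ B / √(n : ℝ) := by
  -- The noise variance is so large that the induction constant enters with coefficient `≤ 1/2`.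
  set τ : ℝ := 1 + (16 * C + 1) ^ 2 with hτ
  have hτ1 : 1 < τ := by rw [hτ]; nlinarith
  have hsτ : √(τ - 1) = 16 * C + 1 := by
    rw [hτ, add_sub_cancel_left, Real.sqrt_sq (by linarith)]
  set B : ℝ := 2 * (8 * C + 4 * L * R * √τ) with hB
  have hB0 : 0 ≤ B := by positivity
  refine ⟨B, hB0, fun n => ?_⟩
  induction n using Nat.strong_induction_on with
  | _ n ih =>
  intro hn z
  have hn1 : (1 : ℝ) ≤ n := by exact_mod_cast hn
  have hs0 : 0 < √(n : ℝ) := Real.sqrt_pos.2 (by linarith)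
  set δ : ℕ → ℝ := fun i => if i = 0 then 0 else min 1 (B / √(i : ℝ)) with hδ
  have hδle : ∀ i < n, ∀ z,
      |(convPow ν i).real (Set.Iic z) - (G i).real (Set.Iic z)| ≤ δ i := by
    intro i hi z
    rcases Nat.eq_zero_or_pos i with rfl | hpos
    · simp [hδ, convPow, hG0]
    · simp only [hδ, hpos.ne', if_false]
      refine le_min ?_ (ih i hi hpos z)
      have := hGp i
      have h1 : (convPow ν i).real (Set.Iic z) ≤ 1 := measureReal_le_one
      have h2 : (G i).real (Set.Iic z) ≤ 1 := measureReal_le_one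
      have h3 : 0 ≤ (convPow ν i).real (Set.Iic z) := measureReal_nonneg
      have h4 : 0 ≤ (G i).real (Set.Iic z) := measureReal_nonneg
      rw [abs_le]; constructor <;> linarith
  have hδ0 : ∀ i, 0 ≤ δ i := by
    intro i; simp only [hδ]; split_ifs
    · exact le_rfl
    · positivity
  have hδ1 : ∀ i, δ i ≤ 1 := by
    intro i; simp only [hδ]; split_ifs
    · exact zero_le_one
    · exact min_le_left _ _
  have hδ2 : ∀ i, 1 ≤ i → δ i ≤ B / √(i : ℝ) := by
    intro i hi; simp only [hδ]
    rw [if_neg (by omega)]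
    exact min_le_right _ _
  have ha := fun z => (telescope_bound ν G hGp hGadd hC n δ hδle τ (by linarith) z).trans
    (sum_errors_le hC0 hB0 hτ1 n hn δ hδ0 hδ1 hδ2)
  have := hGp n
  have := hGp τ
  have hsm := smoothing_ineq (convPow ν n) (G n) (G τ) (R * √τ) (L * (2 * (R * √τ)) / √(n : ℝ)) _
    (hR τ (by linarith)) (fun z => hL n (by linarith) _ (by positivity) z) ha z
  refine hsm.trans ?_
  rw [hsτ]
  have hq : C / (16 * C + 1) ≤ 1 / 16 := by
    rw [div_le_div_iff₀ (by linarith) (by norm_num)]; linarith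
  have e : 2 * ((4 * C + 4 * C * B / (16 * C + 1)) / √(n : ℝ)) +
      2 * (L * (2 * (R * √τ)) / √(n : ℝ)) =
      (8 * C + 8 * B * (C / (16 * C + 1)) + 4 * L * R * √τ) / √(n : ℝ) := by
    field_simp; ring
  rw [e]
  gcongr
  have : 8 * B * (C / (16 * C + 1)) ≤ 8 * B * (1 / 16) := by gcongr
  linarith

/-! ### The Gaussian comparison semigroup -/

/-- The law of `√t · A W`, with `W` a standard Gaussian vector. -/
noncomputable def gaussScale {k : ℕ} (A : Matrix (Fin k) (Fin k) ℝ) (t : ℝ) :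
    Measure (Fin k → ℝ) :=
  (gaussPi k).map fun w => √t • A.mulVec w

@[fun_prop]
lemma measurable_mulVec {k : ℕ} (A : Matrix (Fin k) (Fin k) ℝ) : Measurable A.mulVec :=
  (Continuous.matrix_mulVec continuous_const continuous_id).measurable

instance {k : ℕ} (A : Matrix (Fin k) (Fin k) ℝ) (t : ℝ) :
    IsProbabilityMeasure (gaussScale A t) :=
  Measure.isProbabilityMeasure_map (by fun_prop)

lemma gaussScale_zero {k : ℕ} (A : Matrix (Fin k) (Fin k) ℝ) :
    gaussScale A 0 = Measure.dirac 0 := by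
  simp [gaussScale, Measure.map_const]

/-- Semigroup property: variances add under convolution. -/
lemma gaussScale_conv {k : ℕ} (A : Matrix (Fin k) (Fin k) ℝ) (a b : ℝ) (ha : 0 ≤ a)
    (hb : 0 ≤ b) : gaussScale A a ∗ gaussScale A b = gaussScale A (a + b) := by
  have h := gaussPi_prod_map (d := k) (√a) (√b) (√(a + b))
    (by rw [Real.sq_sqrt ha, Real.sq_sqrt hb, Real.sq_sqrt (by linarith)])
  have h2 := congrArg (Measure.map A.mulVec) h
  rw [Measure.map_map (by fun_prop) (by fun_prop), Measure.map_map (by fun_prop) (by fun_prop)]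
    at h2
  rw [gaussScale, gaussScale, gaussScale, Measure.conv,
    Measure.map_prod_map _ _ (by fun_prop) (by fun_prop),
    Measure.map_map (by fun_prop) (by fun_prop)]
  have e1 : (fun x : (Fin k → ℝ) × (Fin k → ℝ) => x.1 + x.2) ∘
      Prod.map (fun w => √a • A.mulVec w) (fun w => √b • A.mulVec w) =
      A.mulVec ∘ fun p => √a • p.1 + √b • p.2 := by
    ext p
    simp [Matrix.mulVec_add, Matrix.mulVec_smul]
  have e2 : (fun w => √(a + b) • A.mulVec w) = A.mulVec ∘ fun v => √(a + b) • v := by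
    ext p
    simp [Matrix.mulVec_smul]
  rw [e1, e2]
  exact h2

lemma measurableSet_cube {k : ℕ} (R : ℝ) : MeasurableSet {y : Fin k → ℝ | ∀ i, |y i| ≤ R} := by
  rw [Set.ofPred_forall]
  exact MeasurableSet.iInter fun i => measurableSet_le (by fun_prop) (by fun_prop)

/-- Tightness of a single law, with cubes in place of compact sets. -/
lemma exists_cube {k : ℕ} (μ : Measure (Fin k → ℝ)) [IsProbabilityMeasure μ] {ε : ℝ}
    (hε : 0 < ε) : ∃ R, 0 ≤ R ∧ μ.real {y | ∀ i, |y i| ≤ R}ᶜ ≤ ε := by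
  obtain ⟨K, hK, hμ⟩ := isTightMeasureSet_iff_exists_isCompact_measure_compl_le.1
    (isTightMeasureSet_singleton (μ := μ)) (ENNReal.ofReal ε) (by simpa using hε)
  obtain ⟨R, hR⟩ := hK.isBounded.exists_norm_le
  refine ⟨max R 0, le_max_right _ _, ?_⟩
  have hsub : {y : Fin k → ℝ | ∀ i, |y i| ≤ max R 0}ᶜ ⊆ Kᶜ :=
    Set.compl_subset_compl.2 fun y hy i =>
      ((norm_le_pi_norm y i).trans (hR y hy)).trans (le_max_left _ _)
  exact ENNReal.toReal_le_of_le_ofReal hε.le ((measure_mono hsub).trans (hμ _ rfl))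

/-- Tightness at scale `√t`, uniformly in `t`. -/
lemma gaussScale_tight {k : ℕ} (A : Matrix (Fin k) (Fin k) ℝ) : ∃ R, 0 ≤ R ∧ ∀ t > 0,
    (gaussScale A t).real {y | ∀ i, |y i| ≤ R * √t}ᶜ ≤ 1 / 4 := by
  obtain ⟨R, hR0, hR⟩ := exists_cube (gaussScale A 1) (ε := 1 / 4) (by norm_num)
  refine ⟨R, hR0, fun t ht => le_trans (le_of_eq ?_) hR⟩
  have hst : 0 < √t := Real.sqrt_pos.2 ht
  rw [gaussScale, gaussScale, map_measureReal_apply (by fun_prop) (measurableSet_cube _).compl,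
    map_measureReal_apply (by fun_prop) (measurableSet_cube _).compl]
  congr 1
  ext w
  simp only [Set.mem_preimage, Set.mem_compl_iff, Set.mem_ofPred_eq, Pi.smul_apply, smul_eq_mul,
    abs_mul, Real.sqrt_one, one_mul, abs_of_pos hst]
  simp only [mul_comm (√t), mul_le_mul_iff_left₀ hst]

lemma integral_coord {d : ℕ} (i : Fin d) : ∫ w, w i ∂(gaussPi d) = 0 := by
  have h := (measurePreserving_eval (fun _ : Fin d => gaussianReal 0 1) i)
  have h2 := integral_map (φ := Function.eval i) h.measurable.aemeasurable
    (f := fun x : ℝ => x) (μ := gaussPi d) (by fun_prop)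
  rw [h.map_eq, integral_id_gaussianReal] at h2
  exact h2.symm

lemma integral_coord_mul {d : ℕ} (i j : Fin d) :
    ∫ w, w i * w j ∂(gaussPi d) = if i = j then 1 else 0 := by
  split_ifs with hij
  · subst hij
    have h := (measurePreserving_eval (fun _ : Fin d => gaussianReal 0 1) i)
    have h2 := integral_map (φ := Function.eval i) h.measurable.aemeasurable
      (f := fun x : ℝ => x * x) (μ := gaussPi d) (by fun_prop)
    rw [h.map_eq] at h2
    have h3 : Var[id; gaussianReal 0 1] = 1 := by
      rw [variance_id_gaussianReal]; rfl
    rw [variance_of_integral_eq_zero (by fun_prop) (by simp)] at h3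
    simp only [id, sq] at h3
    rw [h3] at h2
    exact h2.symm
  · have hind : iIndepFun (fun (i : Fin d) (w : Fin d → ℝ) => w i) (gaussPi d) :=
      iIndepFun_pi (X := fun _ x => x) (fun _ => by fun_prop)
    have := (hind.indepFun hij).integral_mul_eq_mul_integral
      (measurable_pi_apply i).aestronglyMeasurable (measurable_pi_apply j).aestronglyMeasurable
    simp only [Pi.mul_apply, integral_coord, mul_zero] at this
    exact this

lemma integral_linear_mul {d : ℕ} (a b : Fin d → ℝ) :
    ∫ w, (∑ l, a l * w l) * (∑ m, b m * w m) ∂(gaussPi d) = ∑ l, a l * b l := by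
  have e : ∀ w : Fin d → ℝ, (∑ l, a l * w l) * (∑ m, b m * w m) =
      ∑ l, ∑ m, a l * b m * (w l * w m) := by
    intro w
    rw [Finset.sum_mul_sum]
    exact Finset.sum_congr rfl fun _ _ => Finset.sum_congr rfl fun _ _ => by ring
  simp only [e]
  rw [integral_finsetSum _ fun l _ => integrable_finsetSum _ fun m _ =>
    (integrable_coord_mul l m).const_mul _]
  refine Finset.sum_congr rfl fun l _ => ?_
  rw [integral_finsetSum _ fun m _ => (integrable_coord_mul l m).const_mul _]
  simp only [integral_const_mul, integral_coord_mul]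
  simp

instance isGaussian_gaussPi (d : ℕ) : IsGaussian (gaussPi d) := by
  have hind : iIndepFun (fun (i : Fin d) (w : Fin d → ℝ) => w i) (gaussPi d) :=
    iIndepFun_pi (X := fun _ x => x) (fun _ => by fun_prop)
  have h := hind.hasGaussianLaw (fun i => ⟨by
    have h := (measurePreserving_eval (fun _ : Fin d => gaussianReal 0 1) i)
    have e : (gaussPi d).map (fun w => w i) = gaussianReal 0 1 := h.map_eq
    rw [e]; infer_instance⟩)
  have := h.isGaussian_map
  simpa using this

/-- A nonzero linear functional of a standard Gaussian vector has a bounded density. -/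
lemma gaussPi_slab {d : ℕ} (a : Fin d → ℝ) (ha : 0 < ∑ l, a l * a l) : ∃ c : ℝ, 0 ≤ c ∧
    ∀ x y, x ≤ y → (gaussPi d).real {w | x < ∑ l, a l * w l ∧ ∑ l, a l * w l ≤ y} ≤
      c * (y - x) := by
  set F : StrongDual ℝ (Fin d → ℝ) := ∑ l, a l • ContinuousLinearMap.proj l with hF
  have hFw : ∀ w, F w = ∑ l, a l * w l := by intro w; simp [hF]
  have h := IsGaussian.map_eq_gaussianReal (μ := gaussPi d) F
  have hmean : ∫ w, F w ∂(gaussPi d) = 0 := by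
    simp only [hFw]
    rw [integral_finsetSum _ fun l _ => (integrable_coord l).const_mul _]
    simp only [integral_const_mul, integral_coord, mul_zero, Finset.sum_const_zero]
  have hvar : Var[F; gaussPi d] = ∑ l, a l * a l := by
    rw [variance_of_integral_eq_zero (by fun_prop) hmean]
    simp only [hFw, sq]
    exact integral_linear_mul a a
  rw [hmean, hvar] at h
  set v := (∑ l, a l * a l).toNNReal with hv
  have hv0 : v ≠ 0 := by rw [hv]; exact (Real.toNNReal_pos.2 ha).ne'
  refine ⟨(√(2 * Real.pi * v))⁻¹, by positivity, fun x y hxy => ?_⟩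
  have h1 : gaussPi d {w | x < ∑ l, a l * w l ∧ ∑ l, a l * w l ≤ y} =
      gaussianReal 0 v (Set.Ioc x y) := by
    rw [← h, Measure.map_apply (by fun_prop) measurableSet_Ioc]
    congr 1
    ext w
    simp [hFw]
  rw [measureReal_def, h1]
  refine ENNReal.toReal_le_of_le_ofReal (mul_nonneg (by positivity) (by linarith)) ?_
  rw [gaussianReal_apply _ hv0]
  calc ∫⁻ s in Set.Ioc x y, gaussianPDF 0 v s
      ≤ ∫⁻ _ in Set.Ioc x y, ENNReal.ofReal ((√(2 * Real.pi * v))⁻¹) := by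
        refine lintegral_mono fun s => ?_
        refine ENNReal.ofReal_le_ofReal ?_
        rw [gaussianPDFReal]
        refine mul_le_of_le_one_right (by positivity) (Real.exp_le_one_iff.2 ?_)
        rw [neg_div]
        exact neg_nonpos.2 (by positivity)
    _ = _ := by
        rw [setLIntegral_const, Real.volume_Ioc, ← ENNReal.ofReal_mul (by positivity)]

/-- Anti-concentration: enlarging an orthant by `h` gains at most `O(h / √t)`, by a union bound over
the slabs of the coordinates. Only the rows of `A` have to be nonzero. -/
lemma gaussScale_anti {k : ℕ} (A : Matrix (Fin k) (Fin k) ℝ) (hA : ∀ j, 0 < ∑ l, A j l * A j l) :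
    ∃ L, 0 ≤ L ∧ ∀ t > 0, ∀ h, 0 ≤ h → ∀ z, (gaussScale A t).real (Set.Iic (z + fun _ => h)) ≤
      (gaussScale A t).real (Set.Iic z) + L * h / √t := by
  choose c hc0 hc using fun j => gaussPi_slab (A j) (hA j)
  refine ⟨∑ j, c j, Finset.sum_nonneg fun j _ => hc0 j, fun t ht h hh z => ?_⟩
  have hst : 0 < √t := Real.sqrt_pos.2 ht
  have hm : Measurable fun w => √t • A.mulVec w := by fun_prop
  simp only [gaussScale]
  rw [map_measureReal_apply hm measurableSet_Iic, map_measureReal_apply hm measurableSet_Iic]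
  set E : Fin k → Set (Fin k → ℝ) := fun j =>
    {w | z j / √t < ∑ l, A j l * w l ∧ ∑ l, A j l * w l ≤ (z j + h) / √t} with hE
  have hsub : (fun w => √t • A.mulVec w) ⁻¹' Set.Iic (z + fun _ => h) ⊆
      ((fun w => √t • A.mulVec w) ⁻¹' Set.Iic z) ∪ ⋃ j ∈ Finset.univ, E j := by
    intro w hw
    by_cases hz : w ∈ (fun w => √t • A.mulVec w) ⁻¹' Set.Iic z
    · exact Or.inl hz
    · right
      simp only [Set.mem_preimage, Set.mem_Iic, Pi.le_def, not_forall, not_le] at hz hw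
      obtain ⟨j, hj⟩ := hz
      have hj2 := hw j
      simp only [Set.mem_iUnion]
      refine ⟨j, Finset.mem_univ j, ?_, ?_⟩
      · rw [div_lt_iff₀ hst, mul_comm]
        simpa [Matrix.mulVec, dotProduct] using hj
      · rw [le_div_iff₀ hst, mul_comm]
        simpa [Matrix.mulVec, dotProduct] using hj2
  refine (measureReal_mono hsub).trans ((measureReal_union_le _ _).trans ?_)
  gcongr
  refine (measureReal_biUnion_finset_le _ _).trans ?_
  rw [Finset.sum_mul, Finset.sum_div]
  refine Finset.sum_le_sum fun j _ => ?_
  refine (hc j _ _ (by gcongr; linarith)).trans (le_of_eq ?_)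
  field_simp
  ring

/-! ### Moment comparison under Gaussian smoothing -/

lemma le_one_add_cube {S x : ℝ} (hx : 0 ≤ x) (h : x ≤ S) : x ≤ 1 + S ^ 3 := by
  have hS : 0 ≤ S := hx.trans h
  have h3 : 0 ≤ S ^ 3 := by positivity
  rcases le_total S 1 with h1 | h1
  · linarith
  · nlinarith [mul_le_mul h1 h1 zero_le_one hS]

lemma le_one_add_cube' {S x : ℝ} (hS : 0 ≤ S) (h : x ≤ S * S) : x ≤ 1 + S ^ 3 := by
  have h3 : 0 ≤ S ^ 3 := by positivity
  rcases le_total S 1 with h1 | h1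
  · nlinarith
  · nlinarith [mul_nonneg hS hS]

lemma abs_le_sum_abs {k : ℕ} (w : Fin k → ℝ) (i : Fin k) : |w i| ≤ ∑ i, |w i| :=
  Finset.single_le_sum (f := fun i => |w i|) (fun _ _ => abs_nonneg _) (Finset.mem_univ i)

lemma integrable_coord_of_cube {k : ℕ} {ν : Measure (Fin k → ℝ)} [IsProbabilityMeasure ν]
    (hint : Integrable (fun w => (∑ i, |w i|) ^ 3) ν) (i : Fin k) :
    Integrable (fun w : Fin k → ℝ => w i) ν :=
  ((integrable_const (1 : ℝ)).add hint).mono' (measurable_pi_apply i).aestronglyMeasurable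
    (Filter.Eventually.of_forall fun w =>
      le_one_add_cube (abs_nonneg _) (abs_le_sum_abs w i))

lemma integrable_coord_mul_of_cube {k : ℕ} {ν : Measure (Fin k → ℝ)} [IsProbabilityMeasure ν]
    (hint : Integrable (fun w => (∑ i, |w i|) ^ 3) ν) (i j : Fin k) :
    Integrable (fun w : Fin k → ℝ => w i * w j) ν := by
  refine ((integrable_const (1 : ℝ)).add hint).mono'
    ((measurable_pi_apply i).mul (measurable_pi_apply j)).aestronglyMeasurable
    (Filter.Eventually.of_forall fun w => ?_)
  have h0 : 0 ≤ ∑ i, |w i| := Finset.sum_nonneg fun _ _ => abs_nonneg _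
  rw [Real.norm_eq_abs, abs_mul]
  exact le_one_add_cube' h0
    (mul_le_mul (abs_le_sum_abs w i) (abs_le_sum_abs w j) (abs_nonneg _) h0)

/-- Integrating a smoothed bounded function against a law with finite third moments depends,
up to `O(t ^ (-3/2))`, only on the first two moments of the law: the coefficients of the quadratic
polynomial are chosen before the law `ν`. -/
lemma exists_quadratic_approx {k : ℕ} (A : Matrix (Fin k) (Fin k) ℝ) :
    ∃ C : ℝ, 0 ≤ C ∧ ∀ t : ℝ, 0 < t → ∀ (f : (Fin k → ℝ) → ℝ) (δ : ℝ), Measurable f →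
      (∀ x, |f x| ≤ δ) → ∃ (c₀ : ℝ) (c₁ : Fin k → ℝ) (c₂ : Fin k → Fin k → ℝ),
      ∀ ν : Measure (Fin k → ℝ), IsProbabilityMeasure ν →
        Integrable (fun w => (∑ i, |w i|) ^ 3) ν →
        |∫ x, f x ∂(ν.map A.mulVec ∗ gaussScale A t) -
          (c₀ + ∑ i, c₁ i * ∫ w, w i ∂ν + ∑ i, ∑ j, c₂ i j * ∫ w, w i * w j ∂ν)| ≤
        C * δ / √t ^ 3 * ∫ w, (∑ i, |w i|) ^ 3 ∂ν := by
  obtain ⟨C, hC0, hC⟩ := gaussPi_smooth_taylor k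
  refine ⟨C, hC0, fun t ht f δ hf hδ => ?_⟩
  have hst : 0 < √t := Real.sqrt_pos.2 ht
  obtain ⟨c₀, c₁, c₂, hc⟩ := hC (fun v => f (√t • A.mulVec v)) δ (by fun_prop) (fun v => hδ _)
  refine ⟨c₀, fun i => c₁ i / √t, fun i j => c₂ i j / (√t * √t), fun ν hν hint => ?_⟩
  have hνA : IsProbabilityMeasure (ν.map A.mulVec) :=
    Measure.isProbabilityMeasure_map (by fun_prop)
  set Φ : (Fin k → ℝ) → ℝ := fun w => ∫ v, f (A.mulVec w + √t • A.mulVec v) ∂(gaussPi k) with hΦ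
  have hfm : Measurable fun p : (Fin k → ℝ) × (Fin k → ℝ) =>
      f (A.mulVec p.1 + √t • A.mulVec p.2) := by fun_prop
  have hΦm : StronglyMeasurable Φ := hfm.stronglyMeasurable.integral_prod_right
  have hΦδ : ∀ w, |Φ w| ≤ δ := by
    intro w
    have := norm_integral_le_of_norm_le_const (μ := gaussPi k)
      (f := fun v => f (A.mulVec w + √t • A.mulVec v)) (C := δ)
      (Filter.Eventually.of_forall fun v => hδ _)
    simpa using this
  have hΦi : Integrable Φ ν :=
    integrable_of_bdd ν hΦm.measurable hΦδ
  have hconv : ∫ x, f x ∂(ν.map A.mulVec ∗ gaussScale A t) = ∫ w, Φ w ∂ν := by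
    rw [integral_conv (integrable_of_bdd _ hf hδ)]
    have h1 : ∀ x, ∫ y, f (x + y) ∂(gaussScale A t) =
        ∫ v, f (x + √t • A.mulVec v) ∂(gaussPi k) := by
      intro x
      rw [gaussScale, integral_map (by fun_prop)
        (Measurable.aestronglyMeasurable (by fun_prop))]
    simp only [h1]
    rw [integral_map (by fun_prop)]
    have hfm' : Measurable fun p : (Fin k → ℝ) × (Fin k → ℝ) =>
      f (p.1 + √t • A.mulVec p.2) := by fun_prop
    exact hfm'.stronglyMeasurable.integral_prod_right.aestronglyMeasurable
  have hi1 := integrable_coord_of_cube hint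
  have hi2 := integrable_coord_mul_of_cube hint
  have hpoint : ∀ w, |Φ w - (c₀ + ∑ i, c₁ i / √t * w i +
      ∑ i, ∑ j, c₂ i j / (√t * √t) * (w i * w j))| ≤ C * δ / √t ^ 3 * (∑ i, |w i|) ^ 3 := by
    intro w
    have h := hc ((√t)⁻¹ • w)
    have e1 : ∫ v, f (√t • A.mulVec ((√t)⁻¹ • w + v)) ∂(gaussPi k) = Φ w := by
      simp only [hΦ, Matrix.mulVec_add, Matrix.mulVec_smul, smul_add, smul_smul,
        mul_inv_cancel₀ hst.ne', one_smul]
    rw [e1] at h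
    have e2 : ∑ i, |((√t)⁻¹ • w) i| = (√t)⁻¹ * ∑ i, |w i| := by
      simp [Finset.mul_sum, abs_mul, abs_of_pos hst]
    rw [e2, mul_pow] at h
    have e3 : ∑ i, c₁ i * ((√t)⁻¹ • w) i = ∑ i, c₁ i / √t * w i :=
      Finset.sum_congr rfl fun i _ => by simp; ring
    have e4 : ∑ i, ∑ j, c₂ i j * (((√t)⁻¹ • w) i * ((√t)⁻¹ • w) j) =
        ∑ i, ∑ j, c₂ i j / (√t * √t) * (w i * w j) :=
      Finset.sum_congr rfl fun i _ => Finset.sum_congr rfl fun j _ => by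
        simp only [Pi.smul_apply, smul_eq_mul]
        field_simp
    rw [e3, e4] at h
    refine h.trans (le_of_eq ?_)
    rw [inv_pow]; ring
  have hp1 : Integrable (fun w : Fin k → ℝ => ∑ i, c₁ i / √t * w i) ν :=
    integrable_finsetSum _ fun i _ => (hi1 i).const_mul _
  have hp2 : Integrable (fun w : Fin k → ℝ =>
      ∑ i, ∑ j, c₂ i j / (√t * √t) * (w i * w j)) ν :=
    integrable_finsetSum _ fun i _ => integrable_finsetSum _ fun j _ => (hi2 i j).const_mul _
  have hp01 : Integrable (fun w : Fin k → ℝ => c₀ + ∑ i, c₁ i / √t * w i) ν :=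
    (integrable_const _).add hp1
  have hp : Integrable (fun w : Fin k → ℝ => c₀ + ∑ i, c₁ i / √t * w i +
      ∑ i, ∑ j, c₂ i j / (√t * √t) * (w i * w j)) ν := hp01.add hp2
  have hpoly : ∫ w, (c₀ + ∑ i, c₁ i / √t * w i +
      ∑ i, ∑ j, c₂ i j / (√t * √t) * (w i * w j)) ∂ν =
      c₀ + ∑ i, c₁ i / √t * ∫ w, w i ∂ν +
        ∑ i, ∑ j, c₂ i j / (√t * √t) * ∫ w, w i * w j ∂ν := by
    rw [integral_add hp01 hp2, integral_add (integrable_const _) hp1,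
      integral_const, probReal_univ, one_smul,
      integral_finsetSum _ fun i _ => (hi1 i).const_mul _,
      integral_finsetSum _ fun i _ => integrable_finsetSum _ fun j _ => (hi2 i j).const_mul _]
    congr 2
    · simp only [integral_const_mul]
    · funext i
      rw [integral_finsetSum _ fun j _ => (hi2 i j).const_mul _]
      simp only [integral_const_mul]
  rw [hconv, ← hpoly, ← integral_sub hΦi hp,
    ← integral_const_mul]
  exact (abs_integral_le_integral_abs).trans (integral_mono_of_nonneg
    (Filter.Eventually.of_forall fun _ => abs_nonneg _) (hint.const_mul _)
    (Filter.Eventually.of_forall hpoint))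

/-- Two laws with equal first and second moments and finite third absolute moments become
indistinguishable up to `O(t ^ (-3/2))` after Gaussian smoothing of variance `t`. Both laws and the
noise are images under `A`, so that the smoothing takes place before `A` is applied and `A` may be
singular. -/
lemma comparison {k : ℕ} (A : Matrix (Fin k) (Fin k) ℝ) (ν η : Measure (Fin k → ℝ))
    [hν : IsProbabilityMeasure ν] [hη : IsProbabilityMeasure η]
    (hν3 : Integrable (fun w => (∑ i, |w i|) ^ 3) ν)
    (hη3 : Integrable (fun w => (∑ i, |w i|) ^ 3) η)
    (h1 : ∀ i, ∫ w, w i ∂ν = ∫ w, w i ∂η)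
    (h2 : ∀ i j, ∫ w, w i * w j ∂ν = ∫ w, w i * w j ∂η) :
    ∃ C : ℝ, 0 ≤ C ∧ ∀ t : ℝ, 0 < t → ∀ (f : (Fin k → ℝ) → ℝ) (δ : ℝ), Measurable f →
      (∀ x, |f x| ≤ δ) →
      |∫ x, f x ∂(ν.map A.mulVec ∗ gaussScale A t) -
        ∫ x, f x ∂(η.map A.mulVec ∗ gaussScale A t)| ≤ C * δ / √t ^ 3 := by
  obtain ⟨C, hC0, hC⟩ := exists_quadratic_approx A
  have hn : ∀ ν : Measure (Fin k → ℝ), 0 ≤ ∫ w, (∑ i, |w i|) ^ 3 ∂ν := fun ν =>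
    integral_nonneg fun w => pow_nonneg (Finset.sum_nonneg fun _ _ => abs_nonneg _) 3
  refine ⟨C * (∫ w, (∑ i, |w i|) ^ 3 ∂ν + ∫ w, (∑ i, |w i|) ^ 3 ∂η),
    mul_nonneg hC0 (add_nonneg (hn ν) (hn η)), fun t ht f δ hf hδ => ?_⟩
  obtain ⟨c₀, c₁, c₂, hc⟩ := hC t ht f δ hf hδ
  have ha := hc ν hν hν3
  have hb := hc η hη hη3
  simp only [← h1, ← h2] at hb
  have e : C * (∫ w, (∑ i, |w i|) ^ 3 ∂ν + ∫ w, (∑ i, |w i|) ^ 3 ∂η) * δ / √t ^ 3 =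
      C * δ / √t ^ 3 * ∫ w, (∑ i, |w i|) ^ 3 ∂ν + C * δ / √t ^ 3 * ∫ w, (∑ i, |w i|) ^ 3 ∂η := by
    ring
  rw [e]
  rw [abs_le] at ha hb ⊢
  constructor <;> linarith

/-! ### The Berry–Esseen bound for possibly degenerate covariance -/

lemma integral_mulVec {k : ℕ} (M : Matrix (Fin k) (Fin k) ℝ) {μ : Measure (Fin k → ℝ)}
    [IsProbabilityMeasure μ] (hint : Integrable (fun w => (∑ i, |w i|) ^ 3) μ)
    (h0 : ∀ i, ∫ w, w i ∂μ = 0) (i : Fin k) : ∫ w, M.mulVec w i ∂μ = 0 := by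
  simp only [Matrix.mulVec, dotProduct]
  rw [integral_finsetSum _ fun l _ => (integrable_coord_of_cube hint l).const_mul _]
  simp only [integral_const_mul, h0, mul_zero, Finset.sum_const_zero]

lemma integral_mulVec_mul {k : ℕ} (M V : Matrix (Fin k) (Fin k) ℝ) {μ : Measure (Fin k → ℝ)}
    [IsProbabilityMeasure μ] (hint : Integrable (fun w => (∑ i, |w i|) ^ 3) μ)
    (hV : ∀ i j, ∫ w, w i * w j ∂μ = V i j) (i j : Fin k) :
    ∫ w, M.mulVec w i * M.mulVec w j ∂μ = (M * V * M.transpose) i j := by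
  have e : ∀ w : Fin k → ℝ, M.mulVec w i * M.mulVec w j =
      ∑ l, ∑ m, M i l * M j m * (w l * w m) := by
    intro w
    simp only [Matrix.mulVec, dotProduct]
    rw [Finset.sum_mul_sum]
    exact Finset.sum_congr rfl fun _ _ => Finset.sum_congr rfl fun _ _ => by ring
  simp only [e]
  rw [integral_finsetSum _ fun l _ => integrable_finsetSum _ fun m _ =>
    (integrable_coord_mul_of_cube hint l m).const_mul _]
  simp only [Matrix.mul_apply, Finset.sum_mul, Matrix.transpose_apply]
  rw [Finset.sum_comm]
  refine Finset.sum_congr rfl fun l _ => ?_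
  rw [integral_finsetSum _ fun m _ => (integrable_coord_mul_of_cube hint l m).const_mul _]
  refine Finset.sum_congr rfl fun m _ => ?_
  rw [integral_const_mul, hV]; ring

lemma integrable_cube_map {k : ℕ} (M : Matrix (Fin k) (Fin k) ℝ) {μ : Measure (Fin k → ℝ)}
    (hint : Integrable (fun w => (∑ i, |w i|) ^ 3) μ) :
    Integrable (fun w => (∑ i, |w i|) ^ 3) (μ.map M.mulVec) := by
  rw [integrable_map_measure (Measurable.aestronglyMeasurable (by fun_prop)) (by fun_prop)]
  refine (hint.const_mul ((∑ i, ∑ j, |M i j|) ^ 3)).mono'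
    (Measurable.aestronglyMeasurable (by fun_prop)) (Filter.Eventually.of_forall fun w => ?_)
  have h0 : ∀ v : Fin k → ℝ, 0 ≤ ∑ i, |v i| := fun v => Finset.sum_nonneg fun _ _ => abs_nonneg _
  rw [Real.norm_eq_abs, Function.comp, abs_of_nonneg (pow_nonneg (h0 _) 3), ← mul_pow]
  refine pow_le_pow_left₀ (h0 _) ?_ 3
  rw [Finset.sum_mul]
  refine Finset.sum_le_sum fun i _ => ?_
  rw [Matrix.mulVec, dotProduct, Finset.sum_mul]
  refine (Finset.abs_sum_le_sum_abs _ _).trans (Finset.sum_le_sum fun j _ => ?_)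
  rw [abs_mul]
  exact mul_le_mul_of_nonneg_left (abs_le_sum_abs w j) (abs_nonneg _)

lemma integrable_cube_gaussPi (d : ℕ) :
    Integrable (fun w => (∑ i, |w i|) ^ 3) (gaussPi d) := by
  refine integrable_gaussPi_of_le (by fun_prop) 3 1 fun w => ?_
  have h0 : 0 ≤ ∑ i, |w i| := Finset.sum_nonneg fun _ _ => abs_nonneg _
  rw [abs_of_nonneg (pow_nonneg h0 3), one_mul]
  have h1 : ∑ i, |w i| ≤ Real.exp (∑ i, |w i|) := by
    have := Real.add_one_le_exp (∑ i, |w i|); linarith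
  calc (∑ i, |w i|) ^ 3 ≤ Real.exp (∑ i, |w i|) ^ 3 := pow_le_pow_left₀ h0 h1 3
    _ = _ := by rw [← Real.exp_nat_mul]; norm_num

/-- Every matrix has a generalized inverse. -/
lemma exists_generalized_inverse {k : ℕ} (A : Matrix (Fin k) (Fin k) ℝ) :
    ∃ M : Matrix (Fin k) (Fin k) ℝ, A * M * A = A := by
  obtain ⟨g, hg⟩ := A.mulVecLin.rangeRestrict.exists_rightInverse_of_surjective
    (LinearMap.range_rangeRestrict _)
  obtain ⟨g', hg'⟩ := g.exists_extend
  refine ⟨LinearMap.toMatrix' g', ?_⟩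
  apply Matrix.ext_of_mulVec_single
  intro i
  set w := Pi.single (M := fun _ => ℝ) i 1
  have h1 : g' (A.mulVec w) = g ⟨A.mulVec w, ⟨w, rfl⟩⟩ := by
    rw [← hg']; rfl
  have h2 := congrArg Subtype.val (LinearMap.congr_fun hg ⟨A.mulVec w, ⟨w, rfl⟩⟩)
  rw [← Matrix.mulVec_mulVec, ← Matrix.mulVec_mulVec, LinearMap.toMatrix'_mulVec, h1]
  exact h2

/-- The multivariate Berry–Esseen bound for lower orthants, for a possibly degenerate covariance
matrix `V = A Aᵀ` with positive diagonal. -/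
theorem berry_esseen {k : ℕ} (A V : Matrix (Fin k) (Fin k) ℝ) (hA : A * A.transpose = V)
    (hV0 : ∀ j, 0 < V j j) (ξ : Measure (Fin k → ℝ)) [IsProbabilityMeasure ξ]
    (hint : Integrable (fun w => (∑ i, |w i|) ^ 3) ξ)
    (h1 : ∀ i, ∫ w, w i ∂ξ = 0) (h2 : ∀ i j, ∫ w, w i * w j ∂ξ = V i j) :
    ∃ B, 0 ≤ B ∧ ∀ n : ℕ, 1 ≤ n → ∀ z,
      |(convPow ξ n).real (Set.Iic z) - (gaussScale A n).real (Set.Iic z)| ≤ B / √(n : ℝ) := by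
  obtain ⟨M, hM⟩ := exists_generalized_inverse A
  -- The law `ξ` is carried by the range of `A`: the defect `(A M - 1) x` has zero variance.
  have hae : ∀ᵐ x ∂ξ, (A * M).mulVec x = x := by
    set N := A * M - 1 with hN
    have hNA : N * A = 0 := by rw [hN, Matrix.sub_mul, hM, Matrix.one_mul, sub_self]
    have hi : ∀ i, ∀ᵐ x ∂ξ, N.mulVec x i = 0 := by
      intro i
      have h := integral_mulVec_mul N V hint h2 i i
      rw [← hA, ← Matrix.mul_assoc, hNA, Matrix.zero_mul, Matrix.zero_mul, Matrix.zero_apply] at h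
      rw [integral_eq_zero_iff_of_nonneg (fun x => mul_self_nonneg _)] at h
      · filter_upwards [h] with x hx
        exact mul_self_eq_zero.1 hx
      · have hp : IsProbabilityMeasure (ξ.map N.mulVec) :=
          Measure.isProbabilityMeasure_map (by fun_prop)
        have hm : Measurable fun w : Fin k → ℝ => w i * w i := by fun_prop
        exact (integrable_map_measure hm.aestronglyMeasurable (by fun_prop)).1
          (integrable_coord_mul_of_cube (integrable_cube_map N hint) i i)
    filter_upwards [ae_all_iff.2 hi] with x hx
    have : N.mulVec x = 0 := funext hx
    rwa [hN, Matrix.sub_mulVec, Matrix.one_mulVec, sub_eq_zero] at this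
  -- Both `ξ` and the Gaussian law of variance one are images under `A` of laws with the same first
  -- two moments, namely the image of `ξ` under `M` and that of the standard Gaussian under `M A`.
  set ν := ξ.map M.mulVec with hν
  set η := (gaussPi k).map (M * A).mulVec with hη
  have hνp : IsProbabilityMeasure ν := Measure.isProbabilityMeasure_map (by fun_prop)
  have hηp : IsProbabilityMeasure η := Measure.isProbabilityMeasure_map (by fun_prop)
  have hνA : ν.map A.mulVec = ξ := by
    rw [hν, Measure.map_map (by fun_prop) (by fun_prop)]
    conv_rhs => rw [← Measure.map_id (μ := ξ)]
    refine Measure.map_congr ?_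
    filter_upwards [hae] with x hx
    simpa [Matrix.mulVec_mulVec] using hx
  have hηA : η.map A.mulVec = gaussScale A 1 := by
    rw [hη, Measure.map_map (by fun_prop) (by fun_prop), gaussScale]
    congr 1
    funext w
    simp [Matrix.mulVec_mulVec, ← Matrix.mul_assoc, hM]
  have hg := integrable_cube_gaussPi k
  obtain ⟨C, hC0, hC⟩ := comparison A ν η (integrable_cube_map M hint)
    (integrable_cube_map _ hg)
    (fun i => by
      have hm : Measurable fun w : Fin k → ℝ => w i := by fun_prop
      rw [hν, hη, integral_map (by fun_prop) hm.aestronglyMeasurable,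
        integral_map (by fun_prop) hm.aestronglyMeasurable,
        integral_mulVec M hint h1, integral_mulVec _ hg integral_coord])
    (fun i j => by
      have hm : Measurable fun w : Fin k → ℝ => w i * w j := by fun_prop
      rw [hν, hη, integral_map (by fun_prop) hm.aestronglyMeasurable,
        integral_map (by fun_prop) hm.aestronglyMeasurable,
        integral_mulVec_mul M V hint h2, integral_mulVec_mul _ 1 hg
          (fun i j => by rw [integral_coord_mul, Matrix.one_apply]), ← hA]
      simp only [Matrix.transpose_mul, Matrix.mul_one, Matrix.mul_assoc])
  rw [hνA, hηA] at hC
  obtain ⟨R, hR0, hR⟩ := gaussScale_tight A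
  obtain ⟨L, hL0, hL⟩ := gaussScale_anti A (fun j => by
    have := hV0 j
    rw [← hA, Matrix.mul_apply] at this
    simpa using this)
  exact berry_esseen_abstract ξ (gaussScale A) inferInstance (gaussScale_zero A)
    (gaussScale_conv A) hC0 hC hL0 hL hR0 hR

/-! ### Growth of Gaussian orthant probabilities -/

lemma volume_affine_preimage {d : ℕ} (E : Set (Fin d → ℝ)) (b : Fin d → ℝ) (c : ℝ)
    (hc : 1 / 2 ≤ c) : volume {y : Fin d → ℝ | b + c • y ∈ E} ≤ 2 ^ d * volume E := by
  have e : {y : Fin d → ℝ | b + c • y ∈ E} = (fun y => c • y) ⁻¹' ((fun y => b + y) ⁻¹' E) := rfl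
  have hc0 : 0 < c := by linarith
  rw [e, Measure.addHaar_preimage_smul _ hc0.ne', measure_preimage_add]
  gcongr
  rw [Module.finrank_fin_fun, abs_of_pos (by positivity), ← inv_pow]
  calc ENNReal.ofReal (c⁻¹ ^ d) ≤ ENNReal.ofReal (2 ^ d) := by
        apply ENNReal.ofReal_le_ofReal
        gcongr
        rw [inv_le_comm₀ hc0 (by norm_num)]; linarith
    _ = 2 ^ d := by rw [ENNReal.ofReal_pow (by norm_num)]; simp

/-- Bound on the volume of the pairs of points of `B` whose segment is in `E` at the time `s`. -/
lemma volume_pairs_le {d : ℕ} {B E : Set (Fin d → ℝ)} (hB : MeasurableSet B)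
    (hE : MeasurableSet E) (s : ℝ) :
    (volume.prod volume) {p : (Fin d → ℝ) × (Fin d → ℝ) |
      p.1 ∈ B ∧ p.2 ∈ B ∧ (1 - s) • p.1 + s • p.2 ∈ E} ≤ 2 ^ d * volume E * volume B := by
  have hm : MeasurableSet {p : (Fin d → ℝ) × (Fin d → ℝ) |
      p.1 ∈ B ∧ p.2 ∈ B ∧ (1 - s) • p.1 + s • p.2 ∈ E} := by
    refine (measurable_fst hB).inter ((measurable_snd hB).inter ?_)
    have : Measurable fun p : (Fin d → ℝ) × (Fin d → ℝ) => (1 - s) • p.1 + s • p.2 := by fun_prop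
    exact this hE
  -- Integrate first over the endpoint whose weight in the convex combination is at least `1/2`.
  rcases le_total (1 / 2) s with hs | hs
  · rw [Measure.prod_apply hm, ← setLIntegral_const, ← lintegral_indicator hB]
    refine lintegral_mono fun x => ?_
    by_cases hx : x ∈ B
    · rw [Set.indicator_of_mem hx]
      exact (measure_mono fun y hy => hy.2.2).trans (volume_affine_preimage E ((1 - s) • x) s hs)
    · have : Prod.mk x ⁻¹' {p : (Fin d → ℝ) × (Fin d → ℝ) |
          p.1 ∈ B ∧ p.2 ∈ B ∧ (1 - s) • p.1 + s • p.2 ∈ E} = ∅ := by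
        ext y; simp [hx]
      rw [this]; simp
  · rw [Measure.prod_apply_symm hm, ← setLIntegral_const, ← lintegral_indicator hB]
    refine lintegral_mono fun x => ?_
    by_cases hx : x ∈ B
    · rw [Set.indicator_of_mem hx]
      refine (measure_mono fun y hy => ?_).trans
        (volume_affine_preimage E (s • x) (1 - s) (by linarith))
      have := hy.2.2
      rwa [add_comm] at this
    · have : (fun y => (y, x)) ⁻¹' {p : (Fin d → ℝ) × (Fin d → ℝ) |
          p.1 ∈ B ∧ p.2 ∈ B ∧ (1 - s) • p.1 + s • p.2 ∈ E} = ∅ := by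
        ext y; simp [hx]
      rw [this]; simp

/-- An isoperimetric estimate. A segment from `K` to the complement of `K'`, walked in `m` steps,
must have one of its division points in the layer `K' \ K` as soon as single steps starting in
`K` stay in `K'`. Hence `K' \ K` has volume of order at least `1 / m` within the cube of radius
`R`. -/
lemma layer_volume {d : ℕ} (R : ℝ) (m : ℕ) (hm : 1 ≤ m) {K K' : Set (Fin d → ℝ)}
    (hK : MeasurableSet K) (hK' : MeasurableSet K') (hKK : K ⊆ K')
    (hstep : ∀ x ∈ K, ∀ u : Fin d → ℝ, (∀ i, |u i| ≤ 2 * R / m) → x + u ∈ K') :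
    volume (K ∩ {y | ∀ i, |y i| ≤ R}) * volume ({y | ∀ i, |y i| ≤ R} \ K') ≤
      m * (2 ^ d * volume ((K' \ K) ∩ {y | ∀ i, |y i| ≤ R}) *
        volume {y : Fin d → ℝ | ∀ i, |y i| ≤ R}) := by
  set B : Set (Fin d → ℝ) := {y | ∀ i, |y i| ≤ R} with hBdef
  have hB : MeasurableSet B := measurableSet_cube R
  have hm0 : (0 : ℝ) < m := by exact_mod_cast hm
  have hsub : (K ∩ B) ×ˢ (B \ K') ⊆ ⋃ i ∈ Finset.range m,
      {p : (Fin d → ℝ) × (Fin d → ℝ) | p.1 ∈ B ∧ p.2 ∈ B ∧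
        (1 - ((i + 1 : ℕ) : ℝ) / m) • p.1 + (((i + 1 : ℕ) : ℝ) / m) • p.2 ∈ (K' \ K) ∩ B} := by
    rintro ⟨x, y⟩ ⟨⟨hxK, hxB⟩, hyB, hyK'⟩
    set w : ℕ → Fin d → ℝ := fun i => (1 - (i : ℝ) / m) • x + ((i : ℝ) / m) • y with hw
    have hex : ∃ i, w i ∉ K := ⟨m, fun h => hyK' (hKK (by
      simpa [hw, div_self hm0.ne'] using h))⟩
    classical
    -- The first division point outside `K` is one step away from a point of `K`.
    set i₀ := Nat.find hex with hi₀
    have h1 : w i₀ ∉ K := Nat.find_spec hex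
    have h0 : i₀ ≠ 0 := by
      intro h; rw [h] at h1; apply h1; simpa [hw] using hxK
    obtain ⟨i, hi⟩ := Nat.exists_eq_succ_of_ne_zero h0
    have h2 : w i ∈ K := by
      by_contra h
      exact Nat.find_min hex (m := i) (by omega) h
    have him : i < m := by
      have : i₀ ≤ m := Nat.find_min' hex (fun h => hyK' (hKK (by
        simpa [hw, div_self hm0.ne'] using h)))
      omega
    rw [hi] at h1
    refine Set.mem_biUnion (Finset.mem_range.2 him) ⟨hxB, hyB, ⟨?_, h1⟩, ?_⟩
    · have e : (1 - ((i + 1 : ℕ) : ℝ) / m) • x + (((i + 1 : ℕ) : ℝ) / m) • y =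
          w i + (1 / (m : ℝ)) • (y - x) := by
        ext l
        simp only [hw, Pi.add_apply, Pi.smul_apply, Pi.sub_apply, smul_eq_mul]
        push_cast; ring
      simp only [e]
      refine hstep _ h2 _ fun l => ?_
      rw [Pi.smul_apply, smul_eq_mul, abs_mul, abs_of_pos (by positivity), Pi.sub_apply,
        one_div, inv_mul_eq_div]
      gcongr
      have h3 := abs_le.1 (hxB l)
      have h4 := abs_le.1 (hyB l)
      rw [abs_le]; constructor <;> linarith
    · intro l
      have him' : (((i + 1 : ℕ) : ℝ)) ≤ m := by exact_mod_cast him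
      have hs1 : ((i + 1 : ℕ) : ℝ) / m ≤ 1 := (div_le_one hm0).2 him'
      have hs0 : 0 ≤ ((i + 1 : ℕ) : ℝ) / m := by positivity
      set s := ((i + 1 : ℕ) : ℝ) / m
      simp only [Pi.add_apply, Pi.smul_apply, smul_eq_mul]
      have h3 := abs_le.1 (hxB l)
      have h4 := abs_le.1 (hyB l)
      rw [abs_le]; constructor <;> nlinarith
  rw [← Measure.prod_prod]
  refine (measure_mono hsub).trans ((measure_biUnion_finset_le _ _).trans ?_)
  refine (Finset.sum_le_sum fun i _ => volume_pairs_le hB ((hK'.diff hK).inter hB) _).trans ?_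
  simp

/-- Let the preimage of an orthant under `A` have Gaussian measure at least `α / 2`. Enlarging the
orthant by `h ≥ a / m` in all coordinates adds at least `κ / m` to this measure, unless the result
reaches `α`. No non-degeneracy of `A` is needed. -/
lemma gaussian_growth {d : ℕ} (A : Matrix (Fin d) (Fin d) ℝ) {α : ℝ} (h0 : 0 < α) (h1 : α < 1) :
    ∃ κ > 0, ∃ a > 0, ∀ (z : Fin d → ℝ) (m : ℕ) (h : ℝ), 1 ≤ m → a / m ≤ h →
      α / 2 ≤ (gaussPi d).real {w | ∀ i, A.mulVec w i ≤ z i} →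
      (gaussPi d).real {w | ∀ i, A.mulVec w i ≤ z i + h} < α →
      (gaussPi d).real {w | ∀ i, A.mulVec w i ≤ z i} + κ / m ≤
        (gaussPi d).real {w | ∀ i, A.mulVec w i ≤ z i + h} := by
  obtain ⟨R, hR0, hR⟩ := exists_cube (gaussPi d) (ε := min (α / 4) ((1 - α) / 2))
    (lt_min (by linarith) (by linarith))
  have hRa := hR.trans (min_le_left _ _)
  have hRb := hR.trans (min_le_right _ _)
  obtain ⟨c, hc0, hc⟩ := volume_le_gaussPi d R
  set B : Set (Fin d → ℝ) := {y | ∀ i, |y i| ≤ R} with hBdef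
  have hB : MeasurableSet B := measurableSet_cube R
  have hBfin : volume B ≠ ⊤ := by
    have hsub : B ⊆ Metric.closedBall 0 R := fun y hy => by
      rw [mem_closedBall_zero_iff, pi_norm_le_iff_of_nonneg hR0]
      exact hy
    exact ((measure_mono hsub).trans_lt measure_closedBall_lt_top).ne
  set b := volume.real B with hb
  have hb0 : 0 ≤ b := measureReal_nonneg
  refine ⟨c * (α / 4 * ((1 - α) / 2)) / (2 ^ d * (b + 1)),
    div_pos (mul_pos hc0 (mul_pos (by linarith) (by linarith))) (by positivity),
    (∑ j, ∑ l, |A j l|) * (2 * R) + 1, by positivity, fun z m h hm hh hlo hhi => ?_⟩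
  have hm0 : (0 : ℝ) < m := by exact_mod_cast hm
  set K : Set (Fin d → ℝ) := {w | ∀ i, A.mulVec w i ≤ z i} with hK
  set K' : Set (Fin d → ℝ) := {w | ∀ i, A.mulVec w i ≤ z i + h} with hK'
  have hmeas : ∀ z : Fin d → ℝ, MeasurableSet {w : Fin d → ℝ | ∀ i, A.mulVec w i ≤ z i} := by
    intro z
    exact (measurable_mulVec A) (measurableSet_Iic (a := z))
  have hKm : MeasurableSet K := hmeas z
  have hKm' : MeasurableSet K' := hmeas fun i => z i + h
  have hpos : 0 ≤ h := le_trans (by positivity) hh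
  have hKK : K ⊆ K' := fun w hw i => (hw i).trans (by linarith)
  have hstep : ∀ x ∈ K, ∀ u : Fin d → ℝ, (∀ i, |u i| ≤ 2 * R / m) → x + u ∈ K' := by
    intro x hx u hu i
    rw [Matrix.mulVec_add, Pi.add_apply]
    refine add_le_add (hx i) (le_trans ?_ hh)
    rw [le_div_iff₀ hm0]
    have h3 : A.mulVec u i ≤ (∑ l, |A i l|) * (2 * R / m) := by
      rw [Matrix.mulVec, dotProduct, Finset.sum_mul]
      refine Finset.sum_le_sum fun l _ => (le_abs_self _).trans ?_
      rw [abs_mul]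
      exact mul_le_mul_of_nonneg_left (hu l) (abs_nonneg _)
    have h4 : ∑ l, |A i l| ≤ ∑ j, ∑ l, |A j l| :=
      Finset.single_le_sum (f := fun j => ∑ l, |A j l|)
        (fun _ _ => Finset.sum_nonneg fun _ _ => abs_nonneg _) (Finset.mem_univ i)
    calc A.mulVec u i * m ≤ (∑ l, |A i l|) * (2 * R / m) * m := by gcongr
      _ = (∑ l, |A i l|) * (2 * R) := by field_simp
      _ ≤ (∑ j, ∑ l, |A j l|) * (2 * R) := by gcongr
      _ ≤ _ := by linarith
  have hlay := layer_volume R m hm hKm hKm' hKK hstep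
  set E := (K' \ K) ∩ B with hE
  have hEm : MeasurableSet E := (hKm'.diff hKm).inter hB
  have fin : ∀ s, s ⊆ B → volume s ≠ ⊤ := fun s hs => ((measure_mono hs).trans_lt hBfin.lt_top).ne
  have hlay' : volume.real (K ∩ B) * volume.real (B \ K') ≤ m * (2 ^ d * volume.real E * b) := by
    have := ENNReal.toReal_mono (ENNReal.mul_ne_top (by simp) (ENNReal.mul_ne_top
      (ENNReal.mul_ne_top (by simp) (fin E Set.inter_subset_right)) hBfin)) hlay
    simp only [ENNReal.toReal_mul, ENNReal.toReal_natCast, ENNReal.toReal_pow,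
      ENNReal.toReal_ofNat] at this
    exact this
  have hle : ∀ s, MeasurableSet s → s ⊆ B → (gaussPi d).real s ≤ volume.real s := fun s hs hsB =>
    ENNReal.toReal_mono (fin s hsB) (gaussPi_le_volume hs)
  have hgK : α / 4 ≤ volume.real (K ∩ B) := by
    refine le_trans ?_ (hle _ (hKm.inter hB) Set.inter_subset_right)
    have h5 : (gaussPi d).real K ≤ (gaussPi d).real (K ∩ B) + (gaussPi d).real Bᶜ := by
      refine (measureReal_mono (fun w hw => ?_)).trans (measureReal_union_le _ _)
      by_cases hwB : w ∈ B
      · exact Or.inl ⟨hw, hwB⟩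
      · exact Or.inr hwB
    linarith
  have hgK' : (1 - α) / 2 ≤ volume.real (B \ K') := by
    refine le_trans ?_ (hle _ (hB.diff hKm') Set.sdiff_subset)
    have h5 : (gaussPi d).real Set.univ ≤
        (gaussPi d).real (B \ K') + (gaussPi d).real K' + (gaussPi d).real Bᶜ := by
      refine (measureReal_mono (s₂ := ((B \ K') ∪ K') ∪ Bᶜ) (fun w _ => ?_)).trans
        ((measureReal_union_le _ _).trans (add_le_add_left (measureReal_union_le _ _) _))
      by_cases hwB : w ∈ B
      · by_cases hwK : w ∈ K'
        · exact Or.inl (Or.inr hwK)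
        · exact Or.inl (Or.inl ⟨hwB, hwK⟩)
      · exact Or.inr hwB
    rw [probReal_univ] at h5
    linarith
  have hEg : c * volume.real E ≤ (gaussPi d).real E := by
    have := ENNReal.toReal_mono (measure_ne_top _ _) (hc E hEm fun v hv => hv.2)
    rwa [ENNReal.toReal_mul, ENNReal.toReal_ofReal hc0.le] at this
  have hsum : (gaussPi d).real K + (gaussPi d).real E ≤ (gaussPi d).real K' := by
    rw [← measureReal_union (Set.disjoint_left.2 fun w hw hwE => hwE.1.2 hw) hEm]
    exact measureReal_mono (Set.union_subset hKK fun w hw => hw.1.1)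
  have hE0 : 0 ≤ volume.real E := measureReal_nonneg
  have hfin : c * (α / 4 * ((1 - α) / 2)) / (2 ^ d * (b + 1)) / m ≤ c * volume.real E := by
    rw [div_div, div_le_iff₀ (by positivity), mul_assoc]
    refine mul_le_mul_of_nonneg_left ?_ hc0.le
    calc α / 4 * ((1 - α) / 2) ≤ volume.real (K ∩ B) * volume.real (B \ K') := by
          gcongr
      _ ≤ m * (2 ^ d * volume.real E * b) := hlay'
      _ ≤ m * (2 ^ d * volume.real E * (b + 1)) := by gcongr; linarith
      _ = _ := by ring
  linarith

/-- A probability deficit of order `1 / √n` is compensated by a shift of order `1 / √n`. -/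
lemma exists_shift {d : ℕ} (A : Matrix (Fin d) (Fin d) ℝ) {α : ℝ} (h0 : 0 < α) (h1 : α < 1)
    {C : ℝ} (hC : 0 ≤ C) : ∃ c' : ℝ, 0 ≤ c' ∧ ∃ n₀ : ℕ, 1 ≤ n₀ ∧ ∀ n : ℕ, n₀ ≤ n →
      ∀ z : Fin d → ℝ,
      α - C / √(n : ℝ) ≤ (gaussPi d).real {w | ∀ i, A.mulVec w i ≤ z i} →
      α ≤ (gaussPi d).real {w | ∀ i, A.mulVec w i ≤ z i + c' / √(n : ℝ)} := by
  obtain ⟨κ, hκ, a, ha, H⟩ := gaussian_growth A h0 h1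
  -- The constant for which the growth `κ / m` with `m = ⌈a / h⌉` and `h = c' / √n` exceeds `C / √n`.
  set c' := (C + 1) * (a + 1) / κ with hc'
  have hc'0 : 0 < c' := by positivity
  refine ⟨c', hc'0.le, max 1 ⌈max (c' ^ 2) ((2 * C / α) ^ 2)⌉₊, le_max_left _ _,
    fun n hn z hz => ?_⟩
  have hn1 : 1 ≤ n := (le_max_left _ _).trans hn
  have hn2 : max (c' ^ 2) ((2 * C / α) ^ 2) ≤ n := Nat.ceil_le.1 ((le_max_right _ _).trans hn)
  have hs0 : 0 < √(n : ℝ) := Real.sqrt_pos.2 (by exact_mod_cast hn1)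
  have hs1 : c' ≤ √(n : ℝ) := Real.le_sqrt_of_sq_le ((le_max_left _ _).trans hn2)
  have hs2 : 2 * C / α ≤ √(n : ℝ) := Real.le_sqrt_of_sq_le ((le_max_right _ _).trans hn2)
  set s := √(n : ℝ)
  by_contra hcon
  push Not at hcon
  set h := c' / s with hh
  have hh0 : 0 < h := by positivity
  have hh1 : h ≤ 1 := (div_le_one hs0).2 hs1
  have hlo : α / 2 ≤ (gaussPi d).real {w | ∀ i, A.mulVec w i ≤ z i} := by
    refine le_trans ?_ hz
    have : C / s ≤ α / 2 := by
      rw [div_le_iff₀ h0] at hs2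
      rw [div_le_iff₀ hs0]; linarith
    linarith
  have hm : 1 ≤ ⌈a / h⌉₊ := Nat.one_le_ceil_iff.2 (by positivity)
  have hm0 : (0 : ℝ) < ⌈a / h⌉₊ := by exact_mod_cast hm
  have hg := H z ⌈a / h⌉₊ h hm (by
    rw [div_le_iff₀ hm0, mul_comm, ← div_le_iff₀ hh0]; exact Nat.le_ceil _) hlo hcon
  have hmle : (⌈a / h⌉₊ : ℝ) ≤ (a + 1) / h := by
    refine (Nat.ceil_lt_add_one (by positivity)).le.trans ?_
    rw [add_div]
    gcongr
    exact (one_le_div hh0).2 hh1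
  have hk : C / s < κ / ⌈a / h⌉₊ := by
    calc C / s < (C + 1) / s := by gcongr; linarith
      _ = κ / ((a + 1) / h) := by rw [hh, hc']; field_simp
      _ ≤ κ / ⌈a / h⌉₊ := by gcongr
  linarith

/-! ### Meta-converse, sampling and discrete measures -/

/-- The sum of the values of a random vector over `n` independent samples has law the `n`-fold
convolution power. -/
lemma convPow_eq_map {X : Type*} [MeasurableSpace X] (p : Measure X) [IsProbabilityMeasure p]
    {k : ℕ} {f : X → Fin k → ℝ} (hf : Measurable f) (n : ℕ) :
    convPow (p.map f) n = (Measure.pi fun _ : Fin n => p).map fun x => ∑ i, f (x i) := by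
  have hfp : IsProbabilityMeasure (p.map f) := Measure.isProbabilityMeasure_map hf.aemeasurable
  induction n with
  | zero => simp [convPow, Measure.map_const]
  | succ n ih =>
    have hmp := measurePreserving_piFinSuccAbove (fun _ : Fin (n + 1) => p) 0
    have hs : Measurable fun x : Fin n → X => ∑ i, f (x i) := by fun_prop
    have e : (fun x : Fin (n + 1) → X => ∑ i, f (x i)) =
        (fun y : (Fin k → ℝ) × (Fin k → ℝ) => y.1 + y.2) ∘
          Prod.map f (fun x : Fin n → X => ∑ i, f (x i)) ∘
          MeasurableEquiv.piFinSuccAbove (fun _ => X) 0 := by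
      funext x
      simp [Fin.sum_univ_succ, MeasurableEquiv.piFinSuccAbove, Fin.tail]
    rw [convPow, Measure.conv_comm, ih, Measure.conv, Measure.map_prod_map _ _ hf hs, e,
      ← Measure.map_map (by fun_prop) (by fun_prop), ← Measure.map_map (by fun_prop) (by fun_prop),
      hmp.map_eq]

/-- Weighting by `t` bounds a test by the mass of `G` plus, off `G`, by the change of measure
`μ ≤ c j • q j` for some `j`: the composite meta-converse. -/
lemma meta_converse {Y : Type*} [Countable Y] [MeasurableSpace Y] [MeasurableSingletonClass Y]
    (μ : Measure Y) [IsProbabilityMeasure μ] {k : ℕ} (q : Fin k → Y → ℝ) (t : Y → ℝ)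
    (ht : ∀ y, t y ∈ Set.Icc (0 : ℝ) 1) (hq : ∀ j y, 0 ≤ q j y)
    (hs : ∀ j, Summable fun y => q j y * t y) (c β : Fin k → ℝ) (hc : ∀ j, 0 ≤ c j)
    (hβ : ∀ j, ∑' y, q j y * t y ≤ β j) (G : Set Y)
    (hG : ∀ y, y ∉ G → ∃ j, μ.real {y} ≤ c j * q j y) :
    ∑' y, μ.real {y} * t y ≤ μ.real G + ∑ j, c j * β j := by
  have hGm : MeasurableSet G := G.to_countable.measurableSet
  have hsm : ∀ f : Y → ℝ, (∀ y, f y ∈ Set.Icc (0 : ℝ) 1) →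
      (Summable fun y => μ.real {y} * f y) ∧ ∑' y, μ.real {y} * f y = ∫ y, f y ∂μ := by
    intro f hf
    have hfi : Integrable f μ := by
      refine Integrable.of_bound (measurable_of_countable f).aestronglyMeasurable 1
        (Filter.Eventually.of_forall fun y => ?_)
      rw [Real.norm_eq_abs, abs_of_nonneg (hf y).1]; exact (hf y).2
    refine ⟨?_, by rw [integral_countable hfi]; simp only [smul_eq_mul]⟩
    have h2 := hfi
    rw [← Measure.sum_smul_dirac μ] at h2
    refine h2.summable_of_dirac.congr fun y => ?_
    rw [Real.norm_eq_abs, abs_of_nonneg (hf y).1, measureReal_def]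
  have hind := hsm (G.indicator fun _ => 1) fun y => by
    by_cases hy : y ∈ G <;> simp [hy]
  rw [integral_indicator_const _ hGm, smul_eq_mul, mul_one] at hind
  have hs' : Summable fun y => ∑ j, c j * (q j y * t y) :=
    summable_sum fun j _ => (hs j).mul_left _
  calc ∑' y, μ.real {y} * t y
      ≤ ∑' y, (μ.real {y} * G.indicator (fun _ => 1) y + ∑ j, c j * (q j y * t y)) := by
        refine (hsm t ht).1.tsum_le_tsum (fun y => ?_) (hind.1.add hs')
        have h0 : ∀ j, 0 ≤ c j * (q j y * t y) := fun j =>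
          mul_nonneg (hc j) (mul_nonneg (hq j y) (ht y).1)
        by_cases hy : y ∈ G
        · have := mul_le_mul_of_nonneg_left (ht y).2 (measureReal_nonneg (μ := μ) (s := {y}))
          simpa [hy] using this.trans (le_add_of_nonneg_right (Finset.sum_nonneg fun j _ => h0 j))
        · obtain ⟨j, hj⟩ := hG y hy
          have h1 := mul_le_mul_of_nonneg_right hj (ht y).1
          have h2 := Finset.single_le_sum (fun i _ => h0 i) (Finset.mem_univ j)
          simp only [hy, not_false_eq_true, Set.indicator_of_notMem, mul_zero, zero_add]
          linarith
    _ = μ.real G + ∑ j, c j * ∑' y, q j y * t y := by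
        rw [hind.1.tsum_add hs', hind.2, Summable.tsum_finsetSum fun j _ => (hs j).mul_left _]
        simp only [tsum_mul_left]
    _ ≤ _ := by
        gcongr with j
        exacts [hc j, hβ j]

/-- The purely atomic measure with mass `P x` at each point `x`. -/
noncomputable def massMeasure {X : Type*} [MeasurableSpace X] (P : X → ℝ) : Measure X :=
  Measure.sum fun x => ENNReal.ofReal (P x) • Measure.dirac x

lemma massMeasure_real_singleton {X : Type*} [Countable X] [MeasurableSpace X]
    [MeasurableSingletonClass X] {P : X → ℝ} (h0 : ∀ x, 0 ≤ P x) (x : X) :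
    (massMeasure P).real {x} = P x := by
  rw [measureReal_def, massMeasure, Measure.sum_smul_dirac_singleton, ENNReal.toReal_ofReal (h0 x)]

lemma isProbabilityMeasure_massMeasure {X : Type*} [MeasurableSpace X] {P : X → ℝ}
    (h0 : ∀ x, 0 ≤ P x) (h1 : ∑' x, P x = 1) :
    IsProbabilityMeasure (massMeasure P) := by
  have hs : Summable P := by
    by_contra h
    rw [tsum_eq_zero_of_not_summable h] at h1
    exact zero_ne_one h1
  constructor
  rw [massMeasure, Measure.sum_apply _ MeasurableSet.univ]
  simp only [Measure.smul_apply, measure_univ, smul_eq_mul, mul_one]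
  rw [← ENNReal.ofReal_tsum_of_nonneg h0 hs, h1, ENNReal.ofReal_one]

lemma integral_massMeasure {X : Type*} [Countable X] [MeasurableSpace X]
    [MeasurableSingletonClass X] {P : X → ℝ} (h0 : ∀ x, 0 ≤ P x) (f : X → ℝ) :
    ∫ x, f x ∂(massMeasure P) = ∑' x, P x * f x := by
  rw [massMeasure, integral_sum_dirac fun _ => ENNReal.ofReal_ne_top]
  simp only [ENNReal.toReal_ofReal (h0 _), smul_eq_mul]

lemma integrable_massMeasure_iff {X : Type*} [Countable X] [MeasurableSpace X]
    [MeasurableSingletonClass X] {P : X → ℝ} (h0 : ∀ x, 0 ≤ P x) (f : X → ℝ) :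
    Integrable f (massMeasure P) ↔ Summable fun x => P x * |f x| := by
  rw [massMeasure, integrable_sum_dirac_iff fun _ => ENNReal.ofReal_ne_top]
  simp only [ENNReal.toReal_ofReal (h0 _), Real.norm_eq_abs]

/-- Integrability of the cube of the `ℓ¹` norm follows from that of the coordinates. -/
lemma integrable_cube_of_coord {X : Type*} [MeasurableSpace X] {μ : Measure X} {k : ℕ}
    {f : X → Fin k → ℝ} (hf : Measurable f) (h : ∀ j, Integrable (fun x => |f x j| ^ 3) μ) :
    Integrable (fun x => (∑ j, |f x j|) ^ 3) μ := by
  refine Integrable.mono' ((integrable_finsetSum Finset.univ fun j _ => h j).const_mul ((k : ℝ) ^ 2))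
    (by fun_prop) (Filter.Eventually.of_forall fun x => ?_)
  have h0 : 0 ≤ ∑ j, |f x j| := Finset.sum_nonneg fun j _ => abs_nonneg _
  rw [Real.norm_eq_abs, abs_of_nonneg (pow_nonneg h0 3)]
  rcases Nat.eq_zero_or_pos k with rfl | hk
  · simp
  have := pow_sum_div_card_le_sum_pow (s := Finset.univ) (f := fun j => |f x j|)
    (fun j _ => abs_nonneg _) 2
  rw [div_le_iff₀ (by simpa using pow_pos (Nat.cast_pos.2 hk) 2)] at this
  simpa [mul_comm] using this

/-- The Gaussian comparison law at time `n`, evaluated on an orthant. -/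
lemma gaussScale_Iic {k : ℕ} (A : Matrix (Fin k) (Fin k) ℝ) {n : ℝ} (hn : 0 < n) (b : Fin k → ℝ) :
    (gaussScale A n).real (Set.Iic b) =
      (gaussPi k).real {w | ∀ i, A.mulVec w i ≤ b i / √n} := by
  rw [gaussScale, map_measureReal_apply (by fun_prop) measurableSet_Iic]
  congr 1
  ext w
  simp only [Set.mem_preimage, Set.mem_Iic, Pi.le_def, Pi.smul_apply, smul_eq_mul, Set.mem_ofPred_eq]
  exact forall_congr' fun i => by rw [le_div_iff₀ (Real.sqrt_pos.2 hn), mul_comm]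

/-- Change of measure: a product likelihood ratio whose logarithm is at most `g` is at most
`exp g`. -/
lemma prod_le_exp_mul_prod {ι : Type*} [Fintype ι] {p q : ι → ℝ} (hp : ∀ i, 0 < p i)
    (hq : ∀ i, 0 < q i) {g : ℝ} (h : ∑ i, Real.log (p i / q i) ≤ g) :
    ∏ i, p i ≤ Real.exp g * ∏ i, q i := by
  have e : ∏ i, p i = Real.exp (∑ i, Real.log (p i / q i)) * ∏ i, q i := by
    rw [Real.exp_sum, ← Finset.prod_mul_distrib]
    refine Finset.prod_congr rfl fun i _ => ?_
    rw [Real.exp_log (div_pos (hp i) (hq i)), div_mul_cancel₀ _ (hq i).ne']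
  rw [e]
  have := Finset.prod_nonneg fun i (_ : i ∈ Finset.univ) => (hq i).le
  gcongr

end CHT

/-! ### The third-order converse -/

open MeasureTheory ProbabilityTheory in
/-- **Third-order composite hypothesis testing asymptotics, converse.**
With `ℓ_j(x) := log(P(x)/Q_j(x))`, `D_j := E_P[ℓ_j]`, positive variances, finite third
central moments, covariance matrix `V = A·Aᵀ`, `α ∈ (0,1)` and `ε := 1−α`:
there are `c' ≥ 0` and `n₀` such that for all `n ≥ n₀`, every
`(β₁,…,β_k) ∈ β_α(P^{⊗n}, {Q_j^{⊗n}})` with all `β_j > 0` satisfies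
`((log β_j + n D_j + (1/2) log n + c')/√n)_j ∈ Q_inv(V,ε)`. -/
theorem cht_third_order_converse {𝒳 : Type*} [Countable 𝒳] (k : ℕ)
    (P : 𝒳 → ℝ) (hP0 : ∀ x, 0 ≤ P x) (hP1 : ∑' x, P x = 1)
    (Q : Fin k → 𝒳 → ℝ) (hQ0 : ∀ j x, 0 ≤ Q j x) (hQ1 : ∀ j, ∑' x, Q j x = 1)
    (hQpos : ∀ j x, 0 < P x → 0 < Q j x)
    (D : Fin k → ℝ) (hD : ∀ j, D j = ∑' x, P x * Real.log (P x / Q j x))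
    (hV : ∀ j, 0 < ∑' x, P x * (Real.log (P x / Q j x) - D j) ^ 2)
    (hT : ∀ j, Summable fun x => P x * |Real.log (P x / Q j x) - D j| ^ 3)
    (V : Matrix (Fin k) (Fin k) ℝ)
    (hVdef : ∀ i j, V i j =
      ∑' x, P x * ((Real.log (P x / Q i x) - D i) * (Real.log (P x / Q j x) - D j)))
    (A : Matrix (Fin k) (Fin k) ℝ) (hA : A * A.transpose = V)
    (α ε : ℝ) (hα : α ∈ Set.Ioo (0 : ℝ) 1) (hε : ε = 1 - α) :
    ∃ c' : ℝ, 0 ≤ c' ∧ ∃ n₀ : ℕ, ∀ n : ℕ, n₀ ≤ n → ∀ β : Fin k → ℝ,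
      (∀ j, 0 < β j) →
      (∃ t : (Fin n → 𝒳) → ℝ, (∀ x, t x ∈ Set.Icc (0 : ℝ) 1) ∧
        α ≤ (∑' x : Fin n → 𝒳, (∏ i, P (x i)) * t x) ∧
        ∀ j : Fin k,
          Summable (fun x : Fin n → 𝒳 => (∏ i, Q j (x i)) * t x) ∧
          (∑' x : Fin n → 𝒳, (∏ i, Q j (x i)) * t x) ≤ β j) →
      1 - ε ≤ stdGaussianCdf A (fun j =>
          (Real.log (β j) + (n : ℝ) * D j + Real.log (n : ℝ) / 2 + c')
            / Real.sqrt (n : ℝ)) := by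
  obtain ⟨hα0, hα1⟩ := hα
  let mX : MeasurableSpace 𝒳 := ⊤
  have hsingle : MeasurableSingletonClass 𝒳 := ⟨fun _ => trivial⟩
  have hprob := CHT.isProbabilityMeasure_massMeasure hP0 hP1
  set p := CHT.massMeasure P with hp
  set f : 𝒳 → Fin k → ℝ := fun x j => D j - Real.log (P x / Q j x) with hf
  have hfm : Measurable f := measurable_of_countable f
  have hξ : IsProbabilityMeasure (p.map f) := Measure.isProbabilityMeasure_map hfm.aemeasurable
  have hintp : Integrable (fun x => (∑ j, |f x j|) ^ 3) p := by
    refine CHT.integrable_cube_of_coord hfm fun j => ?_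
    rw [hp, CHT.integrable_massMeasure_iff hP0]
    refine (hT j).congr fun x => ?_
    rw [abs_of_nonneg (pow_nonneg (abs_nonneg (f x j)) 3), hf, abs_sub_comm]
  have hint : Integrable (fun w => (∑ i, |w i|) ^ 3) (p.map f) :=
    (integrable_map_measure (Measurable.aestronglyMeasurable (by fun_prop))
      hfm.aemeasurable).2 hintp
  have h1 : ∀ i, ∫ w, w i ∂(p.map f) = 0 := by
    intro i
    have hfi : Integrable (fun x => f x i) p :=
      (integrable_map_measure (measurable_pi_apply i).aestronglyMeasurable
        hfm.aemeasurable).1 (CHT.integrable_coord_of_cube hint i)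
    rw [integral_map hfm.aemeasurable (measurable_pi_apply i).aestronglyMeasurable]
    have hl : Integrable (fun x => Real.log (P x / Q i x)) p := by
      refine ((integrable_const (D i)).sub hfi).congr (Filter.Eventually.of_forall fun x => ?_)
      simp [hf]
    simp only [hf]
    rw [integral_sub (integrable_const _) hl, integral_const, probReal_univ, one_smul, hp,
      CHT.integral_massMeasure hP0, ← hD i, sub_self]
  have h2 : ∀ i j, ∫ w, w i * w j ∂(p.map f) = V i j := by
    intro i j
    rw [integral_map hfm.aemeasurable (Measurable.aestronglyMeasurable (by fun_prop)), hp,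
      CHT.integral_massMeasure hP0, hVdef]
    exact tsum_congr fun x => by simp only [hf]; ring
  have hV0 : ∀ j, 0 < V j j := by
    intro j
    rw [hVdef]
    simpa only [sq] using hV j
  obtain ⟨B, hB0, hB⟩ := CHT.berry_esseen A V hA hV0 (p.map f) hint h1 h2
  obtain ⟨c', hc', n₀, hn₀, H⟩ := CHT.exists_shift A hα0 hα1 (C := k + B) (by positivity)
  refine ⟨c', hc', n₀, fun n hn β hβ ⟨t, ht, hαt, htQ⟩ => ?_⟩
  have hn1 : 1 ≤ n := hn₀.trans hn
  have hnpos : (0 : ℝ) < n := Nat.cast_pos.2 hn1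
  have hsn : 0 < √(n : ℝ) := Real.sqrt_pos.2 hnpos
  set b : Fin k → ℝ := fun j => Real.log (β j) + (n : ℝ) * D j + Real.log (n : ℝ) / 2 with hb
  set μ : Measure (Fin n → 𝒳) := Measure.pi fun _ => p with hμ
  have hμs : ∀ x, μ.real {x} = ∏ i, P (x i) := by
    intro x
    rw [measureReal_def, hμ, Measure.pi_singleton, ENNReal.toReal_prod]
    exact Finset.prod_congr rfl fun i _ => CHT.massMeasure_real_singleton hP0 (x i)
  -- With the likelihood ratio compared to `1 / (β j * √n)`, each alternative costs `1 / √n`.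
  have key := CHT.meta_converse μ (fun j x => ∏ i, Q j (x i)) t ht
    (fun j x => Finset.prod_nonneg fun i _ => hQ0 j (x i)) (fun j => (htQ j).1)
    (fun j => Real.exp (-Real.log (β j) - Real.log n / 2)) β (fun j => (Real.exp_pos _).le)
    (fun j => (htQ j).2) {x | ∑ i, f (x i) ∈ Set.Iic b} (by
      intro x hx
      simp only [Set.mem_ofPred_eq, Set.mem_Iic, Pi.le_def, not_forall, not_le] at hx
      obtain ⟨j, hj⟩ := hx
      refine ⟨j, ?_⟩
      rw [hμs]
      by_cases hpos : ∀ i, 0 < P (x i)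
      · refine CHT.prod_le_exp_mul_prod hpos (fun i => hQpos j _ (hpos i)) ?_
        simp only [hb, hf, Finset.sum_apply, Finset.sum_sub_distrib, Finset.sum_const,
          Finset.card_univ, Fintype.card_fin, nsmul_eq_mul] at hj
        linarith
      · push Not at hpos
        obtain ⟨i, hi⟩ := hpos
        rw [Finset.prod_eq_zero (Finset.mem_univ i) (le_antisymm hi (hP0 _))]
        exact mul_nonneg (Real.exp_pos _).le (Finset.prod_nonneg fun i _ => hQ0 j (x i)))
  have hcβ : ∀ j, Real.exp (-Real.log (β j) - Real.log n / 2) * β j = 1 / √(n : ℝ) := by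
    intro j
    rw [Real.exp_sub, Real.exp_neg, Real.exp_log (hβ j), ← Real.log_sqrt hnpos.le,
      Real.exp_log hsn]
    field_simp [(hβ j).ne']
  simp only [hcβ, Finset.sum_const, Finset.card_univ, Fintype.card_fin, nsmul_eq_mul, hμs] at key
  have hlaw : μ.real {x | ∑ i, f (x i) ∈ Set.Iic b} =
      (CHT.convPow (p.map f) n).real (Set.Iic b) := by
    rw [CHT.convPow_eq_map p hfm, map_measureReal_apply (by fun_prop) measurableSet_Iic]
    rfl
  have hbe := (abs_le.1 (hB n hn1 b)).2
  rw [CHT.gaussScale_Iic A hnpos] at hbe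
  have hfin := H n hn (fun i => b i / √(n : ℝ)) (by
    have : ((k : ℝ) + B) / √(n : ℝ) = k * (1 / √(n : ℝ)) + B / √(n : ℝ) := by ring
    linarith)
  rw [stdGaussianCdf, Measure.map_apply (by fun_prop) (by
    change MeasurableSet (Set.Iic _)
    exact measurableSet_Iic)]
  rw [hε, sub_sub_cancel]
  refine hfin.trans_eq ?_
  rw [measureReal_def]
  congr 2
  ext w
  simp only [hb, Set.mem_ofPred_eq, Set.mem_preimage, add_div]
end

section
/- Inner shift property of the multidimensional Gaussian inverse set: Fix a d×d positive semidefinite real matrix V and ε ∈ (0,1). Then there exist constants D₁ > 0 and δ₁ > 0 such that for all 0 ≤ δ < δ₁: Q_inv(V,ε) + D₁·δ·1 ⊆ Q_inv(V, ε−δ); equivalently, for every z ∈ ℝ^d with P[Z ≤ z] ≥ 1−ε one has P[Z ≤ z + D₁·δ·1] ≥ 1−ε+δ, where 1 := (1,…,1) ∈ ℝ^d. -/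
open MeasureTheory ProbabilityTheory

namespace QinvShift

lemma norm_rotation_sub_le {E : Type*} [NormedAddCommGroup E] [NormedSpace ℝ E]
    (a b R : ℝ) (x y : E) (hx : ‖x‖ ≤ R) (hy : ‖y‖ ≤ R) :
    ‖(Real.cos a • x + Real.sin a • y) - (Real.cos b • x + Real.sin b • y)‖
      ≤ |a - b| * (2 * R) := by
  have h1 : (Real.cos a • x + Real.sin a • y) - (Real.cos b • x + Real.sin b • y)
      = (Real.cos a - Real.cos b) • x + (Real.sin a - Real.sin b) • y := by
    module
  have hc : |Real.cos a - Real.cos b| ≤ |a - b| := by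
    simpa [Real.dist_eq] using Real.lipschitzWith_cos.dist_le_mul a b
  have hs : |Real.sin a - Real.sin b| ≤ |a - b| := by
    simpa [Real.dist_eq] using Real.lipschitzWith_sin.dist_le_mul a b
  rw [h1]
  refine (norm_add_le _ _).trans ?_
  rw [norm_smul, norm_smul, Real.norm_eq_abs, Real.norm_eq_abs]
  have := mul_le_mul hc hx (norm_nonneg _) (abs_nonneg _)
  have := mul_le_mul hs hy (norm_nonneg _) (abs_nonneg _)
  linarith

/-- The first coordinate of the rotated pair has the original law. -/
lemma measure_prod_rotation_preimage {E : Type*} [NormedAddCommGroup E] [NormedSpace ℝ E]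
    [MeasurableSpace E] [BorelSpace E] [SecondCountableTopology E]
    (μ : Measure E) [IsProbabilityMeasure μ]
    (hrot : ∀ θ, (μ.prod μ).map (ContinuousLinearMap.rotation θ) = μ.prod μ)
    (θ : ℝ) {S : Set E} (hS : MeasurableSet S) :
    (μ.prod μ) {p | Real.cos θ • p.1 + Real.sin θ • p.2 ∈ S} = μ S := by
  have h : (μ.prod μ) (S ×ˢ Set.univ) = μ S := by simp
  rw [← h, ← hrot θ, Measure.map_apply (by fun_prop) (hS.prod .univ), hrot θ]
  congr 1
  ext p
  simp [ContinuousLinearMap.rotation_apply]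

lemma measurableSet_lower {ι : Type*} [Fintype ι] (z : ι → ℝ) :
    MeasurableSet {y : ι → ℝ | ∀ i, y i ≤ z i} :=
  measurableSet_Iic (a := z)

/-- A path from the orthant `K = {y ≤ z}` to the complement of `K_t = {y ≤ z + t}`, made of `N`
steps of size at most `t`, visits `K_t \ K`. The union bound over the steps turns this into
a lower bound for the measure of that shell. -/
lemma lower_orthant_shell_bound {ι : Type*} [Fintype ι] (μ : Measure (ι → ℝ))
    [IsProbabilityMeasure μ]
    (hrot : ∀ θ, (μ.prod μ).map (ContinuousLinearMap.rotation θ) = μ.prod μ)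
    (R t : ℝ) (z : ι → ℝ) (N : ℕ) (hN : 0 < N) (hNt : Real.pi * R ≤ t * N) :
    μ ({y | ∀ i, y i ≤ z i} ∩ Metric.closedBall 0 R) *
      μ ({y | ∀ i, y i ≤ z i + t}ᶜ ∩ Metric.closedBall 0 R)
      ≤ N * μ ({y | ∀ i, y i ≤ z i + t} \ {y | ∀ i, y i ≤ z i}) := by
  set K : Set (ι → ℝ) := {y | ∀ i, y i ≤ z i} with hK
  set Kt : Set (ι → ℝ) := {y | ∀ i, y i ≤ z i + t} with hKt
  have hNpos : (0 : ℝ) < N := by exact_mod_cast hN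
  let a : ℕ → ℝ := fun k => Real.pi / 2 * (k / N)
  let X : ℕ → (ι → ℝ) × (ι → ℝ) → (ι → ℝ) :=
    fun k p => Real.cos (a k) • p.1 + Real.sin (a k) • p.2
  have hm : MeasurableSet (Kt \ K) := (measurableSet_lower _).diff (measurableSet_lower _)
  have hsub : (K ∩ Metric.closedBall 0 R) ×ˢ (Ktᶜ ∩ Metric.closedBall 0 R) ⊆
      ⋃ k ∈ Finset.range N, {p | X (k + 1) p ∈ Kt \ K} := by
    rintro ⟨x, y⟩ ⟨⟨hx, hxR⟩, hy, hyR⟩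
    rw [mem_closedBall_zero_iff] at hxR hyR
    have hX0 : X 0 (x, y) ∈ K := by simpa [X, a] using hx
    have hXN : X N (x, y) ∉ Kt := by
      simpa [X, a, div_self hNpos.ne'] using hy
    have hR : 0 ≤ R := (norm_nonneg _).trans hxR
    have ht : 0 ≤ t := by
      have h0 : 0 ≤ t * N := (mul_nonneg Real.pi_pos.le hR).trans hNt
      exact nonneg_of_mul_nonneg_left h0 hNpos
    have hXN' : X N (x, y) ∉ K := fun h => hXN fun i => (h i).trans (by linarith)
    have hex : ∃ k, k < N ∧ X k (x, y) ∈ K ∧ X (k + 1) (x, y) ∉ K := by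
      by_contra! hcon
      have : ∀ k, k ≤ N → X k (x, y) ∈ K := by
        intro k
        induction k with
        | zero => exact fun _ => hX0
        | succ k ih => exact fun h => hcon k h (ih (by omega))
      exact hXN' (this N le_rfl)
    obtain ⟨k, hk, hin, hout⟩ := hex
    simp only [Set.mem_iUnion, Finset.mem_range]
    refine ⟨k, hk, fun i => ?_, hout⟩
    have hstep := norm_rotation_sub_le (a (k + 1)) (a k) R x y hxR hyR
    have ha : |a (k + 1) - a k| * (2 * R) ≤ t := by
      have : a (k + 1) - a k = Real.pi / 2 / N := by simp only [a]; push_cast; ring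
      rw [this, abs_of_nonneg (by positivity)]
      rw [show Real.pi / 2 / N * (2 * R) = Real.pi * R / N by ring, div_le_iff₀ hNpos]
      exact hNt
    have hi := (norm_le_pi_norm (X (k + 1) (x, y) - X k (x, y)) i).trans (hstep.trans ha)
    rw [Pi.sub_apply, Real.norm_eq_abs] at hi
    have := le_of_abs_le hi
    have := hin i
    linarith
  calc μ (K ∩ Metric.closedBall 0 R) * μ (Ktᶜ ∩ Metric.closedBall 0 R)
      = (μ.prod μ) ((K ∩ Metric.closedBall 0 R) ×ˢ (Ktᶜ ∩ Metric.closedBall 0 R)) := by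
        rw [Measure.prod_prod]
    _ ≤ (μ.prod μ) (⋃ k ∈ Finset.range N, {p | X (k + 1) p ∈ Kt \ K}) := measure_mono hsub
    _ ≤ ∑ k ∈ Finset.range N, (μ.prod μ) {p | X (k + 1) p ∈ Kt \ K} :=
        measure_biUnion_finset_le _ _
    _ = ∑ k ∈ Finset.range N, μ (Kt \ K) :=
        Finset.sum_congr rfl fun k _ => measure_prod_rotation_preimage μ hrot _ hm
    _ = N * μ (Kt \ K) := by simp

lemma exists_closedBall_compl_le {E : Type*} [NormedAddCommGroup E]
    [MeasurableSpace E] [BorelSpace E] [SecondCountableTopology E] [CompleteSpace E]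
    (μ : Measure E) [IsProbabilityMeasure μ] {η : ℝ} (hη : 0 < η) :
    ∃ R : ℝ, 0 < R ∧ μ.real (Metric.closedBall 0 R)ᶜ ≤ η := by
  have h := tendsto_measure_compl_closedBall_of_isTightMeasureSet
    (isTightMeasureSet_singleton (μ := μ)) 0
  have h2 := h.eventually (ge_mem_nhds (ENNReal.ofReal_pos.2 hη))
  obtain ⟨R, hR, hR0⟩ := (h2.and (Filter.eventually_gt_atTop 0)).exists
  refine ⟨R, hR0, ?_⟩
  simp only [Set.mem_singleton_iff, iSup_iSup_eq_left] at hR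
  exact ENNReal.toReal_le_of_le_ofReal hη.le hR

lemma le_measureReal_inter {E : Type*} [MeasurableSpace E] (μ : Measure E)
    [IsProbabilityMeasure μ] {S B : Set E} {η : ℝ}
    (hS : 2 * η ≤ μ.real S) (hB : μ.real Bᶜ ≤ η) : η ≤ μ.real (S ∩ B) := by
  have : μ.real S ≤ μ.real (S ∩ B) + μ.real Bᶜ :=
    (measureReal_mono (by intro x hx; by_cases h : x ∈ B <;> simp [h, hx])).trans
      (measureReal_union_le _ _)
  linarith

/-- The inner shift property for any rotation-invariant law, in particular for every centered
Gaussian one. -/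
lemma inner_shift_of_rotation {ι : Type*} [Fintype ι] (μ : Measure (ι → ℝ))
    [IsProbabilityMeasure μ]
    (hrot : ∀ θ, (μ.prod μ).map (ContinuousLinearMap.rotation θ) = μ.prod μ)
    (ε : ℝ) (hε : ε ∈ Set.Ioo (0 : ℝ) 1) :
    ∃ D₁ : ℝ, 0 < D₁ ∧ ∃ δ₁ : ℝ, 0 < δ₁ ∧
      ∀ δ : ℝ, 0 ≤ δ → δ < δ₁ →
        ∀ z : ι → ℝ, 1 - ε ≤ μ.real {y | ∀ i, y i ≤ z i} →
          1 - ε + δ ≤ μ.real {y | ∀ i, y i ≤ z i + D₁ * δ} := by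
  obtain ⟨hε0, hε1⟩ := hε
  obtain ⟨η, hη0, hη1, hη2⟩ : ∃ η : ℝ, 0 < η ∧ 2 * η ≤ 1 - ε ∧ 2 * η ≤ ε / 2 :=
    ⟨min (1 - ε) (ε / 2) / 2, by
      have : 0 < min (1 - ε) (ε / 2) := lt_min (by linarith) (by linarith)
      linarith, by linarith [min_le_left (1 - ε) (ε / 2)],
      by linarith [min_le_right (1 - ε) (ε / 2)]⟩
  obtain ⟨R, hR0, hR⟩ := exists_closedBall_compl_le μ hη0
  set L := Real.pi * R with hL
  have hL0 : 0 < L := mul_pos Real.pi_pos hR0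
  have hc0 : 0 < η * η := mul_pos hη0 hη0
  -- With `t = D₁ * δ`, the shell has mass at least `η² t / (L + t)`; the bound `δ < η² / 2` gives
  -- `t ≤ L`, so this mass is at least `η² t / (2 L) = δ`.
  refine ⟨2 * L / (η * η), by positivity, min (ε / 2) (η * η / 2),
    lt_min (by linarith) (by linarith), fun δ hδ0 hδ z hz => ?_⟩
  rcases hδ0.eq_or_lt with rfl | hδpos
  · simpa using hz
  have hδ1 : δ < ε / 2 := hδ.trans_le (min_le_left _ _)
  have hδ2 : δ < η * η / 2 := hδ.trans_le (min_le_right _ _)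
  set t := 2 * L / (η * η) * δ with ht
  have ht0 : 0 < t := by positivity
  have hct : η * η * t = 2 * L * δ := by rw [ht]; field_simp
  have htL : t ≤ L := by
    rw [ht, div_mul_eq_mul_div, div_le_iff₀ hc0]
    nlinarith
  by_cases hbig : 1 - ε / 2 ≤ μ.real {y | ∀ i, y i ≤ z i + t}
  · linarith
  push Not at hbig
  have hcompl : 2 * η ≤ μ.real {y | ∀ i, y i ≤ z i + t}ᶜ := by
    rw [probReal_compl_eq_one_sub (measurableSet_lower _)]
    linarith
  have hA := le_measureReal_inter μ (hη1.trans hz) hR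
  have hB := le_measureReal_inter μ hcompl hR
  set N := ⌈L / t⌉₊ with hN
  have hN0 : 0 < N := Nat.ceil_pos.2 (by positivity)
  have hN1 : L ≤ t * N := by
    have := Nat.le_ceil (L / t)
    rw [div_le_iff₀ ht0] at this
    linarith
  have hN2 : t * N ≤ L + t := by
    have := (Nat.ceil_lt_add_one (a := L / t) (by positivity)).le
    have h := mul_le_mul_of_nonneg_left this ht0.le
    rwa [mul_add, mul_one, mul_div_cancel₀ _ ht0.ne'] at h
  have hcore := lower_orthant_shell_bound μ hrot R t z N hN0 hN1
  have hcore' := ENNReal.toReal_mono (by finiteness) hcore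
  rw [ENNReal.toReal_mul, ENNReal.toReal_mul, ENNReal.toReal_natCast] at hcore'
  change μ.real _ * μ.real _ ≤ N * μ.real _ at hcore'
  have hsub : {y : ι → ℝ | ∀ i, y i ≤ z i} ⊆ {y | ∀ i, y i ≤ z i + t} :=
    fun y hy i => (hy i).trans (by linarith)
  rw [measureReal_sdiff hsub (measurableSet_lower _)] at hcore'
  set m := μ.real {y | ∀ i, y i ≤ z i + t} - μ.real {y | ∀ i, y i ≤ z i} with hm
  have hm0 : 0 ≤ m := sub_nonneg.2 (measureReal_mono hsub)
  have h1 : η * η ≤ N * m :=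
    (mul_le_mul hA hB hη0.le measureReal_nonneg).trans hcore'
  have h2 : 2 * L * δ ≤ 2 * L * m := by
    calc 2 * L * δ = t * (η * η) := by rw [← hct]; ring
      _ ≤ t * (N * m) := by gcongr
      _ = t * N * m := by ring
      _ ≤ (L + L) * m := by gcongr; linarith
      _ = 2 * L * m := by ring
  have h3 : δ ≤ m := le_of_mul_le_mul_left h2 (by positivity)
  linarith

lemma isGaussian_pi (d : ℕ) :
    IsGaussian (Measure.pi fun _ : Fin d => gaussianReal 0 1) := by
  have h : iIndepFun (fun (i : Fin d) (w : Fin d → ℝ) => w i)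
      (Measure.pi fun _ : Fin d => gaussianReal 0 1) :=
    iIndepFun_pi (μ := fun _ : Fin d => gaussianReal 0 1) (X := fun _ (x : ℝ) => x)
      fun _ => aemeasurable_id
  have h1 (i : Fin d) : HasGaussianLaw (fun w : Fin d → ℝ => w i)
      (Measure.pi fun _ : Fin d => gaussianReal 0 1) := by
    have := (measurePreserving_eval (fun _ : Fin d => gaussianReal 0 1) i).map_eq
    refine ⟨?_⟩
    change IsGaussian (Measure.map (Function.eval i : (Fin d → ℝ) → ℝ) _)
    rw [this]
    infer_instance
  have h2 := (h.hasGaussianLaw h1).isGaussian_map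
  change IsGaussian (Measure.map id _) at h2
  rwa [Measure.map_id] at h2

lemma integral_dual_pi (d : ℕ) (L : StrongDual ℝ (Fin d → ℝ)) :
    ∫ w, L w ∂(Measure.pi fun _ : Fin d => gaussianReal 0 1) = 0 := by
  have h : ∀ w, L w = ∑ i, w i * L (fun j => if i = j then 1 else 0) :=
    fun w => LinearMap.pi_apply_eq_sum_univ L.toLinearMap w
  have hint : Integrable (fun x : ℝ => x) (gaussianReal 0 1) :=
    IsGaussian.integrable_id
  have hcomp (i : Fin d) : Integrable (fun w : Fin d → ℝ => w i)
      (Measure.pi fun _ : Fin d => gaussianReal 0 1) :=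
    integrable_comp_eval (μ := fun _ : Fin d => gaussianReal 0 1) (f := fun x : ℝ => x) hint
  rw [integral_congr_ae (.of_forall h),
    integral_finsetSum _ fun i _ => (hcomp i).mul_const _]
  refine Finset.sum_eq_zero fun i _ => ?_
  have h0 := integral_comp_eval (μ := fun _ : Fin d => gaussianReal 0 1) (i := i)
    (f := fun x : ℝ => x) (by fun_prop)
  rw [integral_id_gaussianReal] at h0
  rw [integral_mul_const, h0, zero_mul]

lemma map_rotation_mulVec {d : ℕ} (A : Matrix (Fin d) (Fin d) ℝ) (θ : ℝ) :
    let μ := Measure.map (fun w => A.mulVec w) (Measure.pi fun _ : Fin d => gaussianReal 0 1)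
    (μ.prod μ).map (ContinuousLinearMap.rotation θ) = μ.prod μ := by
  intro μ
  have := isGaussian_pi d
  let T : (Fin d → ℝ) →L[ℝ] (Fin d → ℝ) := LinearMap.toContinuousLinearMap A.mulVecLin
  have hμ : IsGaussian μ := isGaussian_map T
  refine IsGaussian.map_rotation_eq_self_of_forall_strongDual_eq_zero (fun L => ?_) θ
  have hmap : μ = Measure.map T (Measure.pi fun _ : Fin d => gaussianReal 0 1) := rfl
  rw [hmap, integral_map (by fun_prop) (by fun_prop)]
  exact integral_dual_pi d (L.comp T)

end QinvShift

/-- **Inner shift property of the multidimensional Gaussian inverse set.**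
For a `d×d` positive semidefinite `V = A·Aᵀ` and `ε ∈ (0,1)` there are `D₁ > 0` and
`δ₁ > 0` such that for all `0 ≤ δ < δ₁` and every `z` with `P[Z ≤ z] ≥ 1−ε`,
`P[Z ≤ z + D₁·δ·1] ≥ 1−ε+δ`. -/
theorem Qinv_inner_shift {d : ℕ} (V A : Matrix (Fin d) (Fin d) ℝ)
    (hV : V.PosSemidef) (hA : A * A.transpose = V)
    (ε : ℝ) (hε : ε ∈ Set.Ioo (0 : ℝ) 1) :
    ∃ D₁ : ℝ, 0 < D₁ ∧ ∃ δ₁ : ℝ, 0 < δ₁ ∧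
      ∀ δ : ℝ, 0 ≤ δ → δ < δ₁ →
        ∀ z : Fin d → ℝ, 1 - ε ≤ stdGaussianCdf A z →
          1 - ε + δ ≤ stdGaussianCdf A (fun i => z i + D₁ * δ) := by
  have : IsProbabilityMeasure (Measure.map (fun w => A.mulVec w)
      (Measure.pi fun _ : Fin d => gaussianReal 0 1)) :=
    Measure.isProbabilityMeasure_map (by fun_prop)
  exact QinvShift.inner_shift_of_rotation _ (QinvShift.map_rotation_mulVec A) ε hε
end
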